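/- arXiv:2112.10631 — 2 statements merged into one kernel-verified Lean document; each statement's English description precedes it below -/
import Mathlib

section
/- Assume h satisfies the control condition: there exist K, γ₀ > 0 such that |d·h'(c·d)| ≤ K(h(d)+1) for all d > 0 and all c with |c−1| ≤ γ₀. Let r be a minimizer of Î over 𝒜_λ. Then r is a solution of the original radial equilibrium equation (d/dR)[R^{n−1} Φ_{,1}(r(R))] = (n−1) R^{n−2} Φ_{,2}(r(R)) on (0,1), where Φ is the unmodified stored energy Φ(v₁,…,vₙ) = (κ/n)(v₁ⁿ + ⋯ + vₙⁿ) + h(v₁⋯vₙ). -/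
open Real MeasureTheory Filter Set
open scoped ENNReal NNReal

noncomputable section

/-- Radial stored energy `Φ(q, v, …, v) = (κ/n)(qⁿ + (n−1)vⁿ) + h(q v^{n−1})`,
the restriction of `Φ(v₁,…,vₙ) = (κ/n)(v₁ⁿ+⋯+vₙⁿ) + h(v₁⋯vₙ)` to points
`(q, v, …, v)`. -/
def Phi (n : ℕ) (κ : ℝ) (h : ℝ → ℝ) (q v : ℝ) : ℝ :=
  (κ / n) * (q ^ n + ((n : ℝ) - 1) * v ^ n) + h (q * v ^ (n - 1))

/-- `Φ_{,1}(q, v, …, v) = κ q^{n−1} + v^{n−1} h'(q v^{n−1})`. -/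
def Phi1 (n : ℕ) (κ : ℝ) (h' : ℝ → ℝ) (q v : ℝ) : ℝ :=
  κ * q ^ (n - 1) + v ^ (n - 1) * h' (q * v ^ (n - 1))

/-- `Φ_{,2}(q, v, …, v) = κ v^{n−1} + q v^{n−2} h'(q v^{n−1})`. -/
def Phi2 (n : ℕ) (κ : ℝ) (h' : ℝ → ℝ) (q v : ℝ) : ℝ :=
  κ * v ^ (n - 1) + q * v ^ (n - 2) * h' (q * v ^ (n - 1))

/-- Radial Cauchy stress `T(q,v) = v^{1−n} Φ_{,1}(q,v,…,v) = κ(q/v)^{n−1} + h'(q v^{n−1})`. -/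
def Tstress (n : ℕ) (κ : ℝ) (h' : ℝ → ℝ) (q v : ℝ) : ℝ :=
  κ * (q / v) ^ (n - 1) + h' (q * v ^ (n - 1))

/-- The determinant function `δ(R) = r'(R) (r(R)/R)^{n−1}`. -/
def del (n : ℕ) (r r' : ℝ → ℝ) (R : ℝ) : ℝ :=
  r' R * (r R / R) ^ (n - 1)

/-- Hypotheses on `h : (0,∞) → [0,∞)`: it is `C²` with derivative `h'` and second
derivative `h''`, `h'' > 0`, `h(d) → ∞` as `d → 0⁺`, `h(d)/d → ∞` as `d → ∞`,
`h'(d) → −∞` as `d → 0⁺` and `h'(d) → ∞` as `d → ∞`. -/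
structure GoodH (h h' h'' : ℝ → ℝ) : Prop where
  nonneg : ∀ d : ℝ, 0 < d → 0 ≤ h d
  deriv1 : ∀ d : ℝ, 0 < d → HasDerivAt h (h' d) d
  deriv2 : ∀ d : ℝ, 0 < d → HasDerivAt h' (h'' d) d
  cont2 : ContinuousOn h'' (Set.Ioi 0)
  hpp_pos : ∀ d : ℝ, 0 < d → 0 < h'' d
  lim_zero : Tendsto h (nhdsWithin 0 (Set.Ioi 0)) atTop
  lim_growth : Tendsto (fun d => h d / d) atTop atTop
  dlim_zero : Tendsto h' (nhdsWithin 0 (Set.Ioi 0)) atBot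
  dlim_top : Tendsto h' atTop atTop

/-- `r ∈ C²((0,1])`, with `r, r' > 0` on `(0,1]`, solving the radial equilibrium
equation `(d/dR)[R^{n−1} Φ_{,1}(r(R))] = (n−1) R^{n−2} Φ_{,2}(r(R))`. -/
structure RadialSol (n : ℕ) (κ : ℝ) (h' : ℝ → ℝ) (r r' r'' : ℝ → ℝ) : Prop where
  pos : ∀ R ∈ Set.Ioc (0:ℝ) 1, 0 < r R
  derivPos : ∀ R ∈ Set.Ioc (0:ℝ) 1, 0 < r' R
  hasDeriv : ∀ R ∈ Set.Ioc (0:ℝ) 1, HasDerivWithinAt r (r' R) (Set.Ioc 0 1) R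
  hasDeriv2 : ∀ R ∈ Set.Ioc (0:ℝ) 1, HasDerivWithinAt r' (r'' R) (Set.Ioc 0 1) R
  cont2 : ContinuousOn r'' (Set.Ioc 0 1)
  equil : ∀ R ∈ Set.Ioc (0:ℝ) 1,
    HasDerivWithinAt (fun s => s ^ (n - 1) * Phi1 n κ h' (r' s) (r s / s))
      (((n : ℝ) - 1) * R ^ (n - 2) * Phi2 n κ h' (r' R) (r R / R)) (Set.Ioc 0 1) R


/-- Modified radial stored energy
`Φ̂(q,v,…,v) = (κ/n)qⁿ + h(q v^{n−1}) + κ q v^{n−1}((n−1)/n + ln(v^{n−1}))`. -/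
def PhiHat (n : ℕ) (κ : ℝ) (h : ℝ → ℝ) (q v : ℝ) : ℝ :=
  (κ / n) * q ^ n + h (q * v ^ (n - 1)) +
    κ * (q * v ^ (n - 1)) * (((n : ℝ) - 1) / n + ((n : ℝ) - 1) * Real.log v)

/-- `Φ̂_{,1}(q,v,…,v) = κ q^{n−1} + v^{n−1} h'(q v^{n−1}) + κ v^{n−1}((n−1)/n + (n−1) ln v)`. -/
def PhiHat1 (n : ℕ) (κ : ℝ) (h' : ℝ → ℝ) (q v : ℝ) : ℝ :=
  κ * q ^ (n - 1) + v ^ (n - 1) * h' (q * v ^ (n - 1)) +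
    κ * v ^ (n - 1) * (((n : ℝ) - 1) / n + ((n : ℝ) - 1) * Real.log v)

/-- `Φ̂_{,2}(q,v,…,v) = q v^{n−2}(h'(q v^{n−1}) + κ + κ(n−1)(1/n + ln v))`. -/
def PhiHat2 (n : ℕ) (κ : ℝ) (h' : ℝ → ℝ) (q v : ℝ) : ℝ :=
  q * v ^ (n - 2) *
    (h' (q * v ^ (n - 1)) + κ + κ * (((n : ℝ) - 1) * (1 / n + Real.log v)))

/-- Modified radial Cauchy stress
`T̂(q,v) = κ(q/v)^{n−1} + h'(q v^{n−1}) + (n−1)κ(1/n + ln v)`. -/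
def THat (n : ℕ) (κ : ℝ) (h' : ℝ → ℝ) (q v : ℝ) : ℝ :=
  κ * (q / v) ^ (n - 1) + h' (q * v ^ (n - 1)) +
    ((n : ℝ) - 1) * κ * (1 / n + Real.log v)

/-- `r ∈ C²((0,1])`, with `r, r' > 0` on `(0,1]`, solving the modified radial
equilibrium equation `(d/dR)[R^{n−1} Φ̂_{,1}(r(R))] = (n−1) R^{n−2} Φ̂_{,2}(r(R))`. -/
structure ModRadialSol (n : ℕ) (κ : ℝ) (h' : ℝ → ℝ) (r r' r'' : ℝ → ℝ) : Prop where
  pos : ∀ R ∈ Set.Ioc (0:ℝ) 1, 0 < r R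
  derivPos : ∀ R ∈ Set.Ioc (0:ℝ) 1, 0 < r' R
  hasDeriv : ∀ R ∈ Set.Ioc (0:ℝ) 1, HasDerivWithinAt r (r' R) (Set.Ioc 0 1) R
  hasDeriv2 : ∀ R ∈ Set.Ioc (0:ℝ) 1, HasDerivWithinAt r' (r'' R) (Set.Ioc 0 1) R
  cont2 : ContinuousOn r'' (Set.Ioc 0 1)
  equil : ∀ R ∈ Set.Ioc (0:ℝ) 1,
    HasDerivWithinAt (fun s => s ^ (n - 1) * PhiHat1 n κ h' (r' s) (r s / s))
      (((n : ℝ) - 1) * R ^ (n - 2) * PhiHat2 n κ h' (r' R) (r R / R)) (Set.Ioc 0 1) R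


/-- The admissible set `𝒜_λ`: `r ∈ W^{1,1}(0,1)` (absolutely continuous with
integrable derivative `r'`), `r(1) = λ`, `r' > 0` a.e. in `(0,1)` and `r(0) ≥ 0`. -/
structure Adm (lam : ℝ) (r r' : ℝ → ℝ) : Prop where
  intg : IntegrableOn r' (Set.Ioc 0 1)
  ftc : ∀ R ∈ Set.Icc (0:ℝ) 1, r R = r 0 + ∫ t in Set.Ioc 0 R, r' t
  derivPos : ∀ᵐ R ∂(volume.restrict (Set.Ioc (0:ℝ) 1)), 0 < r' R
  bc : r 1 = lam
  c0 : 0 ≤ r 0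

/-- The modified energy functional `Î`, valued in `EReal` (it is the integral of
`R^{n−1} Φ̂(r'(R), r(R)/R, …, r(R)/R)` minus `(κ(n−1)/n) λⁿ ln λ`, the integral being
defined as the difference of the lower integrals of the positive and negative parts). -/
def IHatE (n : ℕ) (κ lam : ℝ) (h : ℝ → ℝ) (r r' : ℝ → ℝ) : EReal :=
  (((∫⁻ R in Set.Ioc (0:ℝ) 1,
      ENNReal.ofReal (R ^ (n - 1) * PhiHat n κ h (r' R) (r R / R))) : ℝ≥0∞) : EReal)
  - (((∫⁻ R in Set.Ioc (0:ℝ) 1,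
      ENNReal.ofReal (-(R ^ (n - 1) * PhiHat n κ h (r' R) (r R / R)))) : ℝ≥0∞) : EReal)
  - ((κ * ((n : ℝ) - 1) / n * lam ^ n * Real.log lam : ℝ) : EReal)


/-- The factor by which the determinant is multiplied when `r'` is scaled by `1 + εψ` and
`r` by `1 + εχ`. -/
def varFactor (n : ℕ) (ψ χ ε : ℝ) : ℝ := (1 + ε * ψ) * (1 + ε * χ) ^ (n - 1)

/-- The derivative of `varFactor` in `ε`. -/
def varFactorDeriv (n : ℕ) (ψ χ ε : ℝ) : ℝ :=
  ψ * (1 + ε * χ) ^ (n - 1) + (1 + ε * ψ) * (((n : ℝ) - 1) * (1 + ε * χ) ^ (n - 2) * χ)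

/-- The logarithmic coefficient in the modified stored energy. -/
def logCoeff (n : ℕ) (v : ℝ) : ℝ := ((n : ℝ) - 1) / n + ((n : ℝ) - 1) * Real.log v

/-- The modified energy density at radius `R` after scaling `q` by `1 + εψ` and `x` by `1 + εχ`. -/
def curveEnergy (n : ℕ) (κ : ℝ) (h : ℝ → ℝ) (R x q ψ χ ε : ℝ) : ℝ :=
  κ / n * (R ^ (n - 1) * q ^ n) * (1 + ε * ψ) ^ n +
    R ^ (n - 1) * h (varFactor n ψ χ ε * (q * (x / R) ^ (n - 1))) +
    κ * (q * x ^ (n - 1)) *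
      (varFactor n ψ χ ε * (logCoeff n (x / R) + ((n : ℝ) - 1) * Real.log (1 + ε * χ)))

/-- The derivative of `curveEnergy` in `ε`. -/
def curveEnergyDeriv (n : ℕ) (κ : ℝ) (h' : ℝ → ℝ) (R x q ψ χ ε : ℝ) : ℝ :=
  κ * (R ^ (n - 1) * q ^ n) * ((1 + ε * ψ) ^ (n - 1) * ψ) +
    R ^ (n - 1) * (h' (varFactor n ψ χ ε * (q * (x / R) ^ (n - 1))) *
      (varFactorDeriv n ψ χ ε * (q * (x / R) ^ (n - 1)))) +
    κ * (q * x ^ (n - 1)) *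
      (varFactorDeriv n ψ χ ε * (logCoeff n (x / R) + ((n : ℝ) - 1) * Real.log (1 + ε * χ)) +
        varFactor n ψ χ ε * (((n : ℝ) - 1) * (χ / (1 + ε * χ))))

/-- An `ε`-independent bound for `curveEnergyDeriv`. -/
def curveBound (n : ℕ) (κ K : ℝ) (h : ℝ → ℝ) (R x q : ℝ) : ℝ :=
  κ * (R ^ (n - 1) * q ^ n) * 2 ^ (n - 1) +
    (n * 2 ^ (n - 1)) * K * (R ^ (n - 1) * (h (q * (x / R) ^ (n - 1)) + 1)) +
    κ * (q * x ^ (n - 1)) *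
      ((n * 2 ^ (n - 1)) * (|logCoeff n (x / R)| + ((n : ℝ) - 1)) +
        2 ^ n * (((n : ℝ) - 1) * 2))

theorem one_add_mul_mem_Icc {ε χ : ℝ} (hε : |ε| ≤ 1 / 2) (hχ : |χ| ≤ 1) :
    1 / 2 ≤ 1 + ε * χ ∧ 1 + ε * χ ≤ 3 / 2 := by
  have h1 : |ε * χ| ≤ 1 / 2 := by
    rw [abs_mul]; nlinarith [abs_nonneg ε, abs_nonneg χ]
  rw [abs_le] at h1
  constructor <;> linarith

theorem varFactor_pos {n : ℕ} {ψ χ ε : ℝ} (hε : |ε| ≤ 1 / 2) (hψ : |ψ| ≤ 1) (hχ : |χ| ≤ 1) :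
    0 < varFactor n ψ χ ε := by
  have h1 := one_add_mul_mem_Icc hε hψ
  have h2 := one_add_mul_mem_Icc hε hχ
  have h3 : 0 < 1 + ε * ψ := by linarith
  have h4 : 0 < 1 + ε * χ := by linarith
  unfold varFactor
  positivity

theorem varFactor_le {n : ℕ} (hn : 2 ≤ n) {ψ χ ε : ℝ} (hε : |ε| ≤ 1 / 2) (hψ : |ψ| ≤ 1)
    (hχ : |χ| ≤ 1) : varFactor n ψ χ ε ≤ 2 ^ n := by
  obtain ⟨m, rfl⟩ := Nat.exists_eq_add_of_le' hn
  have h1 := one_add_mul_mem_Icc hε hψ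
  have h2 := one_add_mul_mem_Icc hε hχ
  have h3 : 0 ≤ 1 + ε * ψ := by linarith
  have h4 : 0 ≤ 1 + ε * χ := by linarith
  calc varFactor (m + 2) ψ χ ε = (1 + ε * ψ) * (1 + ε * χ) ^ (m + 1) := rfl
    _ ≤ 2 * 2 ^ (m + 1) := by gcongr <;> linarith
    _ = 2 ^ (m + 2) := by ring

theorem abs_varFactorDeriv_le {n : ℕ} (hn : 2 ≤ n) {ψ χ ε : ℝ} (hε : |ε| ≤ 1 / 2)
    (hψ : |ψ| ≤ 1) (hχ : |χ| ≤ 1) : |varFactorDeriv n ψ χ ε| ≤ n * 2 ^ (n - 1) := by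
  obtain ⟨m, rfl⟩ := Nat.exists_eq_add_of_le' hn
  have h1 := one_add_mul_mem_Icc hε hψ
  have h2 := one_add_mul_mem_Icc hε hχ
  have h3 : 0 ≤ 1 + ε * ψ := by linarith
  have h4 : 0 ≤ 1 + ε * χ := by linarith
  have h5 : (0:ℝ) ≤ m + 1 := by positivity
  calc |varFactorDeriv (m + 2) ψ χ ε|
      = |ψ * (1 + ε * χ) ^ (m + 1) + (1 + ε * ψ) * (((m : ℝ) + 1) * (1 + ε * χ) ^ m * χ)| := by
        unfold varFactorDeriv
        simp only [show m + 2 - 1 = m + 1 from rfl, show m + 2 - 2 = m from rfl]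
        push_cast
        congr 4
        ring
    _ ≤ |ψ| * (1 + ε * χ) ^ (m + 1) + (1 + ε * ψ) * (((m : ℝ) + 1) * (1 + ε * χ) ^ m * |χ|) := by
        refine (abs_add_le _ _).trans (le_of_eq ?_)
        simp only [abs_mul, abs_pow, abs_of_nonneg h3, abs_of_nonneg h4, abs_of_nonneg h5]
    _ ≤ 1 * 2 ^ (m + 1) + 2 * (((m : ℝ) + 1) * 2 ^ m * 1) := by
        gcongr <;> linarith
    _ = ((m + 2 : ℕ) : ℝ) * 2 ^ (m + 2 - 1) := by
        push_cast
        ring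

theorem hasDerivAt_varFactor {n : ℕ} (hn : 2 ≤ n) (ψ χ ε : ℝ) :
    HasDerivAt (varFactor n ψ χ) (varFactorDeriv n ψ χ ε) ε := by
  obtain ⟨m, rfl⟩ := Nat.exists_eq_add_of_le' hn
  have hψ : HasDerivAt (fun e : ℝ => 1 + e * ψ) ψ ε := by
    simpa using ((hasDerivAt_id ε).mul_const ψ).const_add 1
  have hχ : HasDerivAt (fun e : ℝ => 1 + e * χ) χ ε := by
    simpa using ((hasDerivAt_id ε).mul_const χ).const_add 1
  refine (hψ.mul (hχ.pow (m + 1))).congr_deriv ?_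
  unfold varFactorDeriv
  rw [show m + 2 - 1 = m + 1 from rfl, show m + 2 - 2 = m from rfl,
    show m + 1 - 1 = m from rfl]
  push_cast
  simp only [Pi.pow_apply]
  ring

theorem abs_varFactor_sub_one_le {n : ℕ} (hn : 2 ≤ n) {ψ χ ε : ℝ} (hε : |ε| ≤ 1 / 2)
    (hψ : |ψ| ≤ 1) (hχ : |χ| ≤ 1) : |varFactor n ψ χ ε - 1| ≤ n * 2 ^ (n - 1) * |ε| := by
  have h1 := (convex_Icc (-(1/2) : ℝ) (1/2)).norm_image_sub_le_of_norm_hasDerivWithin_le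
    (f := varFactor n ψ χ) (f' := varFactorDeriv n ψ χ) (C := n * 2 ^ (n - 1))
    (x := 0) (y := ε)
    (fun e _ => (hasDerivAt_varFactor hn ψ χ e).hasDerivWithinAt)
    (fun e he => abs_varFactorDeriv_le hn (abs_le.2 he) hψ hχ)
    ⟨by norm_num, by norm_num⟩ (abs_le.1 hε)
  simpa [varFactor] using h1

theorem hasDerivAt_curveEnergy {n : ℕ} (hn : 2 ≤ n) {κ : ℝ} {h h' h'' : ℝ → ℝ}
    (hh : GoodH h h' h'') {R x q ψ χ ε : ℝ} (hR : 0 < R) (hx : 0 < x) (hq : 0 < q)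
    (hε : |ε| ≤ 1 / 2) (hψ : |ψ| ≤ 1) (hχ : |χ| ≤ 1) :
    HasDerivAt (curveEnergy n κ h R x q ψ χ) (curveEnergyDeriv n κ h' R x q ψ χ ε) ε := by
  have hc := hasDerivAt_varFactor hn ψ χ ε
  have hcpos := varFactor_pos (n := n) hε hψ hχ
  have hd : 0 < q * (x / R) ^ (n - 1) := by positivity
  have hψ' : HasDerivAt (fun e : ℝ => 1 + e * ψ) ψ ε := by
    simpa using ((hasDerivAt_id ε).mul_const ψ).const_add 1
  have hχ' : HasDerivAt (fun e : ℝ => 1 + e * χ) χ ε := by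
    simpa using ((hasDerivAt_id ε).mul_const χ).const_add 1
  have hχpos : 1 + ε * χ ≠ 0 := by linarith [(one_add_mul_mem_Icc hε hχ).1]
  have h1 := (hψ'.pow n).const_mul (κ / n * (R ^ (n - 1) * q ^ n))
  have h2 := ((hh.deriv1 _ (mul_pos hcpos hd)).comp ε
    (hc.mul_const (q * (x / R) ^ (n - 1)))).const_mul (R ^ (n - 1))
  have h3 := (hc.mul (((hχ'.log hχpos).const_mul ((n : ℝ) - 1)).const_add
    (logCoeff n (x / R)))).const_mul (κ * (q * x ^ (n - 1)))
  refine ((h1.add h2).add h3).congr_deriv ?_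
  unfold curveEnergyDeriv
  have hn0 : (n : ℝ) ≠ 0 := by positivity
  field_simp

theorem abs_curveEnergyDeriv_le {n : ℕ} (hn : 2 ≤ n) {κ : ℝ} (hκ : 0 < κ) {h h' : ℝ → ℝ}
    {K γ : ℝ} (hctrl : ∀ d : ℝ, 0 < d → ∀ c : ℝ, |c - 1| ≤ γ → |d * h' (c * d)| ≤ K * (h d + 1))
    {R x q ψ χ ε : ℝ} (hR : 0 < R) (hx : 0 < x) (hq : 0 < q)
    (hε : |ε| ≤ 1 / 2) (hεγ : n * 2 ^ (n - 1) * |ε| ≤ γ) (hψ : |ψ| ≤ 1) (hχ : |χ| ≤ 1) :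
    |curveEnergyDeriv n κ h' R x q ψ χ ε| ≤ curveBound n κ K h R x q := by
  have hd : 0 < q * (x / R) ^ (n - 1) := by positivity
  have hcd := abs_varFactorDeriv_le hn hε hψ hχ
  have hcpos := varFactor_pos (n := n) hε hψ hχ
  have hcle := varFactor_le hn hε hψ hχ
  have hc1 := (abs_varFactor_sub_one_le hn hε hψ hχ).trans hεγ
  have hcc := hctrl _ hd _ hc1
  have h1 := one_add_mul_mem_Icc hε hψ
  have h2 := one_add_mul_mem_Icc hε hχ
  have h3 : 0 ≤ 1 + ε * ψ := by linarith
  have h4 : 0 < 1 + ε * χ := by linarith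
  have hn1 : (0:ℝ) ≤ (n : ℝ) - 1 := by
    have : (2:ℝ) ≤ n := by exact_mod_cast hn
    linarith
  have hlog : |Real.log (1 + ε * χ)| ≤ 1 := by
    rw [abs_le]
    constructor
    · have := Real.one_sub_inv_le_log_of_pos h4
      have h5 : (1 + ε * χ)⁻¹ ≤ 2 := by
        rw [inv_le_comm₀ h4 (by norm_num)]; linarith
      linarith
    · have := Real.log_le_sub_one_of_pos h4
      linarith
  have hquot : |χ / (1 + ε * χ)| ≤ 2 := by
    rw [abs_div, abs_of_pos h4, div_le_iff₀ h4]
    linarith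
  unfold curveEnergyDeriv curveBound
  refine (abs_add_le _ _).trans (add_le_add ((abs_add_le _ _).trans (add_le_add ?_ ?_)) ?_)
  · rw [abs_mul, abs_of_nonneg (by positivity : 0 ≤ κ * (R ^ (n - 1) * q ^ n)), abs_mul, abs_pow,
      abs_of_nonneg h3]
    gcongr
    calc (1 + ε * ψ) ^ (n - 1) * |ψ| ≤ 2 ^ (n - 1) * 1 := by
          gcongr; linarith
      _ = 2 ^ (n - 1) := mul_one _
  · calc |R ^ (n - 1) * (h' (varFactor n ψ χ ε * (q * (x / R) ^ (n - 1))) *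
            (varFactorDeriv n ψ χ ε * (q * (x / R) ^ (n - 1))))|
        = R ^ (n - 1) * (|varFactorDeriv n ψ χ ε| * |q * (x / R) ^ (n - 1) *
            h' (varFactor n ψ χ ε * (q * (x / R) ^ (n - 1)))|) := by
          rw [abs_mul, abs_of_pos (pow_pos hR _), ← abs_mul (varFactorDeriv n ψ χ ε)]
          congr 2
          ring
      _ ≤ R ^ (n - 1) * ((n * 2 ^ (n - 1)) * (K * (h (q * (x / R) ^ (n - 1)) + 1))) := by
          gcongr
      _ = _ := by ring
  · rw [abs_mul, abs_of_nonneg (by positivity : 0 ≤ κ * (q * x ^ (n - 1)))]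
    gcongr
    refine (abs_add_le _ _).trans (add_le_add ?_ ?_)
    · rw [abs_mul]
      gcongr
      refine (abs_add_le _ _).trans (add_le_add le_rfl ?_)
      rw [abs_mul, abs_of_nonneg hn1]
      nlinarith
    · rw [abs_mul, abs_of_pos hcpos, abs_mul, abs_of_nonneg hn1]
      gcongr

theorem energyDensity_scaled (n : ℕ) (κ : ℝ) (h : ℝ → ℝ) {R x q ψ χ ε : ℝ}
    (hR : 0 < R) (hx : 0 < x) (hε : |ε| ≤ 1 / 2) (hχ : |χ| ≤ 1) :
    R ^ (n - 1) * PhiHat n κ h (q * (1 + ε * ψ)) (x * (1 + ε * χ) / R) =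
      curveEnergy n κ h R x q ψ χ ε := by
  have h4 : 0 < 1 + ε * χ := by linarith [(one_add_mul_mem_Icc hε hχ).1]
  have hlog : Real.log (x * (1 + ε * χ) / R) = Real.log (x / R) + Real.log (1 + ε * χ) := by
    rw [← Real.log_mul (by positivity) h4.ne']
    congr 1
    ring
  have harg : q * (1 + ε * ψ) * (x * (1 + ε * χ) / R) ^ (n - 1) =
      varFactor n ψ χ ε * (q * (x / R) ^ (n - 1)) := by
    unfold varFactor
    rw [mul_div_right_comm, mul_pow]
    ring
  have hxR : R ^ (n - 1) * (x / R) ^ (n - 1) = x ^ (n - 1) := by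
    rw [← mul_pow, mul_div_cancel₀ _ hR.ne']
  unfold PhiHat curveEnergy logCoeff
  rw [harg, hlog, mul_pow q, ← hxR]
  ring

theorem aemeasurable_comp_of_continuousOn_Ioi {μ : Measure ℝ} {g f : ℝ → ℝ}
    (hg : ContinuousOn g (Ioi 0)) (hf : AEMeasurable f μ) (hpos : ∀ᵐ x ∂μ, 0 < f x) :
    AEMeasurable (fun x => g (f x)) μ := by
  classical
  have hm : Measurable ((Ioi (0:ℝ)).piecewise g (fun _ => 0)) :=
    ContinuousOn.measurable_piecewise hg continuousOn_const measurableSet_Ioi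
  refine (hm.comp_aemeasurable hf).congr ?_
  filter_upwards [hpos] with x hx
  exact Set.piecewise_eq_of_mem _ _ _ hx

namespace Adm

variable {lam : ℝ} {r r' : ℝ → ℝ}

theorem continuousOn (ha : Adm lam r r') : ContinuousOn r (Icc 0 1) := by
  have h1 : ContinuousOn (fun x => ∫ t in Ioc 0 x, r' t) (Icc 0 1) :=
    intervalIntegral.continuousOn_primitive
      ((integrableOn_Icc_iff_integrableOn_Ioc (by finiteness)).2 ha.intg)
  exact (h1.const_add (r 0)).congr ha.ftc

theorem setIntegral_pos (ha : Adm lam r r') {a b : ℝ} (h0 : 0 ≤ a) (hab : a < b) (h1 : b ≤ 1) :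
    0 < ∫ t in Ioc a b, r' t := by
  have hsub : Ioc a b ⊆ Ioc (0:ℝ) 1 := Ioc_subset_Ioc h0 h1
  have hpos : ∀ᵐ t ∂volume.restrict (Ioc a b), 0 < r' t :=
    ae_restrict_of_ae_restrict_of_subset hsub ha.derivPos
  rw [integral_pos_iff_support_of_nonneg_ae (hpos.mono fun _ ht => ht.le)
    (ha.intg.mono_set hsub)]
  have h1 : volume.restrict (Ioc a b) (Function.support r') =
      volume.restrict (Ioc a b) univ := by
    refine measure_congr ?_
    filter_upwards [hpos] with t ht
    exact propext ⟨fun _ => trivial, fun _ => ht.ne'⟩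
  rw [h1]
  simpa using hab

theorem pos (ha : Adm lam r r') {R : ℝ} (hR : R ∈ Ioc (0:ℝ) 1) : 0 < r R := by
  rw [ha.ftc R ⟨hR.1.le, hR.2⟩]
  linarith [ha.c0, ha.setIntegral_pos le_rfl hR.1 hR.2]

theorem sub_eq (ha : Adm lam r r') {R S : ℝ} (hR : R ∈ Icc (0:ℝ) 1) (hS : S ∈ Icc (0:ℝ) 1)
    (hRS : R ≤ S) : r S - r R = ∫ t in Ioc R S, r' t := by
  rw [ha.ftc R hR, ha.ftc S hS, ← Ioc_union_Ioc_eq_Ioc hR.1 hRS,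
    setIntegral_union (Set.Ioc_disjoint_Ioc_of_le le_rfl) measurableSet_Ioc
    (ha.intg.mono_set (Ioc_subset_Ioc_right hR.2))
    (ha.intg.mono_set (Ioc_subset_Ioc hR.1 hS.2))]
  ring

theorem le_lam (ha : Adm lam r r') {R : ℝ} (hR : R ∈ Icc (0:ℝ) 1) : r R ≤ lam := by
  have h1 := ha.sub_eq hR (right_mem_Icc.2 zero_le_one) hR.2
  have h2 : 0 ≤ ∫ t in Ioc R 1, r' t := by
    refine integral_nonneg_of_ae ?_
    have := ae_restrict_of_ae_restrict_of_subset (Ioc_subset_Ioc_left hR.1) ha.derivPos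
    exact this.mono fun _ ht => ht.le
  rw [ha.bc] at h1
  linarith

theorem aemeasurable (ha : Adm lam r r') :
    AEMeasurable r (volume.restrict (Ioc 0 1)) :=
  (ha.continuousOn.mono Ioc_subset_Icc_self).aemeasurable measurableSet_Ioc

theorem aemeasurable_deriv (ha : Adm lam r r') :
    AEMeasurable r' (volume.restrict (Ioc 0 1)) :=
  ha.intg.aestronglyMeasurable.aemeasurable

/-- Almost everywhere on `(0,1]`, the radius, `r` and `r'` are positive, and `R ≤ 1`, `r ≤ λ`. -/
theorem ae_pos (ha : Adm lam r r') : ∀ᵐ R ∂volume.restrict (Ioc (0:ℝ) 1),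
    R ∈ Ioc (0:ℝ) 1 ∧ 0 < r R ∧ r R ≤ lam ∧ 0 < r' R := by
  filter_upwards [ha.derivPos, ae_restrict_mem measurableSet_Ioc] with R h1 h2
  exact ⟨h2, ha.pos h2, ha.le_lam (Ioc_subset_Icc_self h2), h1⟩

end Adm

theorem setIntegral_mul_primitive {a : ℝ} {u w : ℝ → ℝ} (hu : IntegrableOn u (Ioc a 1))
    (hw : IntegrableOn w (Ioc a 1)) :
    ∫ x in Ioc a 1, w x * ∫ t in Ioc a x, u t =
      ∫ t in Ioc a 1, u t * ∫ x in Ioc t 1, w x := by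
  set μ := volume.restrict (Ioc a 1) with hμ
  have hint : Integrable (Function.uncurry fun x t : ℝ =>
      {p : ℝ × ℝ | p.2 ≤ p.1}.indicator (fun p => w p.1 * u p.2) (x, t)) (μ.prod μ) := by
    refine Integrable.indicator (Integrable.mul_prod hw hu) ?_
    exact measurableSet_le measurable_snd measurable_fst
  have hswap := integral_integral_swap hint
  have h1 : ∀ x ∈ Ioc a 1, w x * ∫ t in Ioc a x, u t =
      ∫ t, {p : ℝ × ℝ | p.2 ≤ p.1}.indicator (fun p => w p.1 * u p.2) (x, t) ∂μ := by
    intro x hx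
    have : (fun t : ℝ => {p : ℝ × ℝ | p.2 ≤ p.1}.indicator (fun p => w p.1 * u p.2) (x, t)) =
        (Iic x).indicator (fun t => w x * u t) := by
      ext t
      simp [Set.indicator_apply]
    rw [this, integral_indicator measurableSet_Iic, hμ, Measure.restrict_restrict measurableSet_Iic,
      integral_const_mul]
    congr 3
    ext t
    simp only [mem_inter_iff, mem_Iic, mem_Ioc] at *
    grind
  have h2 : ∀ t ∈ Ioc a 1, u t * ∫ x in Ioc t 1, w x =
      ∫ x, {p : ℝ × ℝ | p.2 ≤ p.1}.indicator (fun p => w p.1 * u p.2) (x, t) ∂μ := by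
    intro t ht
    have : (fun x : ℝ => {p : ℝ × ℝ | p.2 ≤ p.1}.indicator (fun p => w p.1 * u p.2) (x, t)) =
        (Ici t).indicator (fun x => u t * w x) := by
      ext x
      simp [Set.indicator_apply, mul_comm]
    rw [this, integral_indicator measurableSet_Ici, hμ, Measure.restrict_restrict measurableSet_Ici,
      integral_const_mul, ← integral_Icc_eq_integral_Ioc]
    congr 3
    ext x
    simp only [mem_inter_iff, mem_Ici, mem_Ioc, mem_Icc] at *
    grind
  rw [setIntegral_congr_fun measurableSet_Ioc h1, setIntegral_congr_fun measurableSet_Ioc h2]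
  exact hswap

/-- A weighted du Bois-Reymond lemma with test functions `1_A - ∫_A w / ∫ w`. -/
theorem ae_eq_const_of_weighted {μ : Measure ℝ} {w g : ℝ → ℝ} (hw : Integrable w μ)
    (hwpos : ∀ᵐ x ∂μ, 0 < w x) (hg : Integrable (fun x => w x * g x) μ)
    (horth : ∀ A : Set ℝ, MeasurableSet A →
      ∫ x, w x * g x * (A.indicator 1 x - (∫ y in A, w y ∂μ) / ∫ y, w y ∂μ) ∂μ = 0) :
    ∃ c : ℝ, ∀ᵐ x ∂μ, g x = c := by
  set W := ∫ x, w x ∂μ with hW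
  refine ⟨(∫ x, w x * g x ∂μ) / W, ?_⟩
  set c := (∫ x, w x * g x ∂μ) / W with hc
  have hzero : (fun x => w x * g x - c * w x) =ᵐ[μ] 0 := by
    refine (hg.sub (hw.const_mul c)).ae_eq_zero_of_forall_setIntegral_eq_zero ?_
    intro A hA _
    have h1 := horth A hA
    have h2 : ∀ x, w x * g x * (A.indicator 1 x - (∫ y in A, w y ∂μ) / W) =
        A.indicator (fun x => w x * g x) x - (∫ y in A, w y ∂μ) / W * (w x * g x) := by
      intro x
      by_cases hx : x ∈ A <;> simp [hx] <;> ring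
    simp_rw [h2] at h1
    rw [integral_sub (hg.indicator hA) (hg.const_mul _), integral_indicator hA,
      integral_const_mul] at h1
    change ∫ x in A, (w x * g x - c * w x) ∂μ = 0
    rw [integral_sub hg.integrableOn (hw.const_mul c).integrableOn, integral_const_mul, ← h1, hc]
    ring
  filter_upwards [hzero, hwpos] with x hx hxp
  have : w x * (g x - c) = 0 := by
    simp only [Pi.zero_apply] at hx
    linarith
  rcases mul_eq_zero.1 this with h0 | h0
  · exact absurd h0 hxp.ne'
  · linarith

theorem hasDerivWithinAt_integral_Ioc {f : ℝ → ℝ} (hf : ContinuousOn f (Ioc 0 1)) {R : ℝ}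
    (hR : R ∈ Ioc (0:ℝ) 1) :
    HasDerivWithinAt (fun x => ∫ t in Ioc x 1, f t) (-f R) (Ioc 0 1) R := by
  set g : ℝ → ℝ := fun x => f (min x 1) with hg
  have hgc : ContinuousOn g (Ioi 0) := by
    refine hf.comp (by fun_prop) ?_
    intro x hx
    exact ⟨lt_min hx one_pos, min_le_right _ _⟩
  have hsub : uIcc R 1 ⊆ Ioi (0:ℝ) := by
    rw [uIcc_of_le hR.2]
    exact fun x hx => lt_of_lt_of_le hR.1 hx.1
  have hR0 : Ioi (0:ℝ) ∈ nhds R := Ioi_mem_nhds hR.1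
  have h1 : HasDerivAt (fun x => ∫ t in x..1, g t) (-g R) R :=
    intervalIntegral.integral_hasDerivAt_left ((hgc.mono hsub).intervalIntegrable)
      (hgc.stronglyMeasurableAtFilter isOpen_Ioi R hR.1) (hgc.continuousAt hR0)
  have hgR : g R = f R := by simp [hg, min_eq_left hR.2]
  rw [hgR] at h1
  have hEq : ∀ x ∈ Ioc (0:ℝ) 1, ∫ t in Ioc x 1, f t = ∫ t in x..1, g t := by
    intro x hx
    rw [intervalIntegral.integral_of_le hx.2]
    refine setIntegral_congr_fun measurableSet_Ioc fun t ht => ?_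
    simp [hg, min_eq_left ht.2]
  exact h1.hasDerivWithinAt.congr hEq (hEq R hR)

theorem continuousOn_integral_Ioc_left {a : ℝ} {w : ℝ → ℝ} (hw : IntegrableOn w (Ioc a 1)) :
    ContinuousOn (fun R => ∫ x in Ioc R 1, w x) (Icc a 1) := by
  have h1 : ContinuousOn (fun R => (∫ x in Ioc a 1, w x) - ∫ x in Ioc a R, w x) (Icc a 1) :=
    continuousOn_const.sub (intervalIntegral.continuousOn_primitive
      ((integrableOn_Icc_iff_integrableOn_Ioc (by finiteness)).2 hw))
  refine h1.congr fun R hR => ?_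
  simp only
  rw [← Ioc_union_Ioc_eq_Ioc hR.1 hR.2,
    setIntegral_union (Set.Ioc_disjoint_Ioc_of_le le_rfl) measurableSet_Ioc
      (hw.mono_set (Ioc_subset_Ioc_right hR.2)) (hw.mono_set (Ioc_subset_Ioc_left hR.1))]
  ring

theorem continuousOn_integral_Ioc_of_forall {w : ℝ → ℝ}
    (hw : ∀ a : ℝ, 0 < a → IntegrableOn w (Ioc a 1)) :
    ContinuousOn (fun R => ∫ x in Ioc R 1, w x) (Ioc 0 1) := by
  intro R hR
  have hR2 : 0 < R / 2 := half_pos hR.1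
  have h1 := continuousOn_integral_Ioc_left (hw (R / 2) hR2) R ⟨by linarith, hR.2⟩
  refine h1.mono_of_mem_nhdsWithin ?_
  have h2 : Ioi (R / 2) ∈ nhdsWithin R (Ioc 0 1) :=
    mem_nhdsWithin_of_mem_nhds (Ioi_mem_nhds (by linarith))
  filter_upwards [h2, self_mem_nhdsWithin] with x hx hx1
  exact ⟨le_of_lt hx, hx1.2⟩

theorem GoodH.continuousOn {h h' h'' : ℝ → ℝ} (hh : GoodH h h' h'') : ContinuousOn h (Ioi 0) :=
  fun d hd => (hh.deriv1 d hd).continuousAt.continuousWithinAt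

theorem GoodH.continuousOn_deriv {h h' h'' : ℝ → ℝ} (hh : GoodH h h' h'') :
    ContinuousOn h' (Ioi 0) :=
  fun d hd => (hh.deriv2 d hd).continuousAt.continuousWithinAt

theorem IHatE_eq_coe {n : ℕ} {κ lam : ℝ} {h s s' : ℝ → ℝ}
    (hs : IntegrableOn (fun R => R ^ (n - 1) * PhiHat n κ h (s' R) (s R / R)) (Ioc 0 1)) :
    IHatE n κ lam h s s' =
      (((∫ R in Ioc (0:ℝ) 1, R ^ (n - 1) * PhiHat n κ h (s' R) (s R / R)) -
        κ * ((n : ℝ) - 1) / n * lam ^ n * Real.log lam : ℝ) : EReal) := by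
  have h1 := integral_eq_lintegral_pos_part_sub_lintegral_neg_part hs
  have hp : ∫⁻ R in Ioc (0:ℝ) 1,
      ENNReal.ofReal (R ^ (n - 1) * PhiHat n κ h (s' R) (s R / R)) ≠ ⊤ := by
    refine ne_of_lt (lt_of_le_of_lt (lintegral_mono fun R => ?_) hs.2)
    exact Real.ofReal_le_enorm _
  have hm : ∫⁻ R in Ioc (0:ℝ) 1,
      ENNReal.ofReal (-(R ^ (n - 1) * PhiHat n κ h (s' R) (s R / R))) ≠ ⊤ := by
    refine ne_of_lt (lt_of_le_of_lt (lintegral_mono fun R => ?_) hs.2)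
    rw [← enorm_neg]
    exact Real.ofReal_le_enorm _
  unfold IHatE
  rw [h1, EReal.coe_sub, EReal.coe_sub, EReal.coe_ennreal_toReal hp, EReal.coe_ennreal_toReal hm]

section Energy

variable {n : ℕ} {κ lam : ℝ} {h h' h'' : ℝ → ℝ} {r r' : ℝ → ℝ}

theorem Adm.ae_det_pos (ha : Adm lam r r') (n : ℕ) :
    ∀ᵐ R ∂volume.restrict (Ioc (0:ℝ) 1), 0 < r' R * (r R / R) ^ (n - 1) := by
  filter_upwards [ha.ae_pos] with R hR
  obtain ⟨⟨h1, -⟩, h2, -, h3⟩ := hR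
  positivity

theorem Adm.aemeasurable_ratio (ha : Adm lam r r') :
    AEMeasurable (fun R => r R / R) (volume.restrict (Ioc 0 1)) :=
  ha.aemeasurable.div aemeasurable_id'

theorem Adm.aemeasurable_det (ha : Adm lam r r') (n : ℕ) :
    AEMeasurable (fun R => r' R * (r R / R) ^ (n - 1)) (volume.restrict (Ioc 0 1)) :=
  ha.aemeasurable_deriv.mul (ha.aemeasurable_ratio.pow_const _)

theorem Adm.aemeasurable_energy (ha : Adm lam r r') (hh : GoodH h h' h'') :
    AEMeasurable (fun R => R ^ (n - 1) * PhiHat n κ h (r' R) (r R / R))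
      (volume.restrict (Ioc 0 1)) := by
  have h1 := aemeasurable_comp_of_continuousOn_Ioi hh.continuousOn (ha.aemeasurable_det n)
    (ha.ae_det_pos n)
  have h2 := ha.aemeasurable_deriv
  have h3 := ha.aemeasurable_ratio
  have h4 := ha.aemeasurable_det n
  have h5 : AEMeasurable (fun R => κ * (r' R * (r R / R) ^ (n - 1)) *
      (((n : ℝ) - 1) / n + ((n : ℝ) - 1) * Real.log (r R / R))) (volume.restrict (Ioc 0 1)) := by
    fun_prop
  exact (measurable_id.pow_const (n - 1)).aemeasurable.mul
    ((((h2.pow_const n).const_mul (κ / n)).add h1).add h5)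

/-- The logarithmic term of the modified energy is bounded below by a multiple of `r'`. -/
theorem neg_le_logCoeff_term (hn : 2 ≤ n) {R x q : ℝ} (hR : R ∈ Ioc (0:ℝ) 1) (hx : 0 < x)
    (hxl : x ≤ lam) (hq : 0 < q) :
    -(((n : ℝ) - 1) * lam ^ (n - 2) * q) ≤ q * x ^ (n - 1) * logCoeff n (x / R) := by
  have hn1 : (1:ℝ) ≤ (n : ℝ) - 1 := by
    have : (2:ℝ) ≤ n := by exact_mod_cast hn
    linarith
  have hlog : -(x⁻¹) ≤ Real.log (x / R) := by
    have h1 : Real.log x ≤ Real.log (x / R) := by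
      apply Real.log_le_log hx
      rw [le_div_iff₀ hR.1]
      nlinarith [hR.2]
    linarith [Real.one_sub_inv_le_log_of_pos hx]
  have hL : -(((n : ℝ) - 1) * x⁻¹) ≤ logCoeff n (x / R) := by
    unfold logCoeff
    have : 0 ≤ ((n : ℝ) - 1) / n := by positivity
    nlinarith
  have hpow : x ^ (n - 1) = x ^ (n - 2) * x := by
    rw [← pow_succ]; congr 1; omega
  calc -(((n : ℝ) - 1) * lam ^ (n - 2) * q) ≤ -(((n : ℝ) - 1) * x ^ (n - 2) * q) := by
        gcongr
    _ = q * x ^ (n - 1) * (-(((n : ℝ) - 1) * x⁻¹)) := by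
        rw [hpow]; field_simp
    _ ≤ _ := by gcongr

theorem energyDensity_eq (n : ℕ) (κ : ℝ) (h : ℝ → ℝ) {R : ℝ} (hR : 0 < R) (x q : ℝ) :
    R ^ (n - 1) * PhiHat n κ h q (x / R) =
      κ / n * (R ^ (n - 1) * q ^ n) + R ^ (n - 1) * h (q * (x / R) ^ (n - 1)) +
        κ * (q * x ^ (n - 1) * logCoeff n (x / R)) := by
  have hxR : R ^ (n - 1) * (x / R) ^ (n - 1) = x ^ (n - 1) := by
    rw [← mul_pow, mul_div_cancel₀ _ hR.ne']
  unfold PhiHat logCoeff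
  rw [← hxR]
  ring

theorem Adm.lintegral_neg_lt_top (hn : 2 ≤ n) (hκ : 0 < κ) (hh : GoodH h h' h'')
    (ha : Adm lam r r') :
    ∫⁻ R in Ioc (0:ℝ) 1, ENNReal.ofReal (-(R ^ (n - 1) * PhiHat n κ h (r' R) (r R / R))) < ⊤ := by
  have hint : Integrable (fun R => κ * (((n : ℝ) - 1) * lam ^ (n - 2) * r' R))
      (volume.restrict (Ioc 0 1)) := (ha.intg.const_mul _).const_mul _
  refine lt_of_le_of_lt (lintegral_mono_ae ?_) hint.2
  filter_upwards [ha.ae_pos] with R ⟨hR, hx, hxl, hq⟩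
  refine (ENNReal.ofReal_le_ofReal ?_).trans (Real.ofReal_le_enorm _)
  have h1 := neg_le_logCoeff_term hn hR hx hxl hq
  have h2 : 0 ≤ κ / n * (R ^ (n - 1) * r' R ^ n) := by have := hR.1; positivity
  have h3 : 0 ≤ R ^ (n - 1) * h (r' R * (r R / R) ^ (n - 1)) := by
    have := hR.1
    exact mul_nonneg (by positivity) (hh.nonneg _ (by positivity))
  rw [energyDensity_eq n κ h hR.1]
  nlinarith

theorem adm_linear (hlam : 0 < lam) : Adm lam (fun R => lam * R) (fun _ => lam) where
  intg := by simp
  ftc R hR := by simp [hR.1, mul_comm]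
  derivPos := by simp [hlam]
  bc := by simp
  c0 := by simp

theorem integrableOn_energy_linear (n : ℕ) (κ lam : ℝ) (h : ℝ → ℝ) :
    IntegrableOn (fun R => R ^ (n - 1) * PhiHat n κ h lam (lam * R / R)) (Ioc 0 1) := by
  have h1 : IntegrableOn (fun R : ℝ => R ^ (n - 1) * PhiHat n κ h lam lam) (Ioc 0 1) := by
    have : Continuous (fun R : ℝ => R ^ (n - 1) * PhiHat n κ h lam lam) := by fun_prop
    exact this.integrableOn_Ioc
  refine h1.congr_fun (fun R hR => ?_) measurableSet_Ioc
  simp only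
  rw [mul_div_cancel_right₀ _ hR.1.ne']

theorem integrableOn_energy_of_minimizer (hn : 2 ≤ n) (hκ : 0 < κ) (hh : GoodH h h' h'')
    (hlam : 0 < lam) (ha : Adm lam r r')
    (hmin : ∀ s s' : ℝ → ℝ, Adm lam s s' → IHatE n κ lam h r r' ≤ IHatE n κ lam h s s') :
    IntegrableOn (fun R => R ^ (n - 1) * PhiHat n κ h (r' R) (r R / R)) (Ioc 0 1) := by
  have hneg := ha.lintegral_neg_lt_top hn hκ hh
  have h1 := hmin _ _ (adm_linear hlam)
  rw [IHatE_eq_coe (integrableOn_energy_linear n κ lam h)] at h1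
  have hpos : ∫⁻ R in Ioc (0:ℝ) 1,
      ENNReal.ofReal (R ^ (n - 1) * PhiHat n κ h (r' R) (r R / R)) < ⊤ := by
    by_contra hcon
    rw [not_lt, top_le_iff] at hcon
    unfold IHatE at h1
    lift (∫⁻ R in Ioc (0:ℝ) 1, ENNReal.ofReal (-(R ^ (n - 1) * PhiHat n κ h (r' R) (r R / R))))
      to ℝ≥0 using hneg.ne with N
    rw [hcon] at h1
    have h2 : ((⊤ : ℝ≥0∞) : EReal) - ((N : ℝ≥0∞) : EReal) = ⊤ := by
      rw [EReal.coe_ennreal_top]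
      exact EReal.top_sub_coe (N : ℝ)
    rw [h2, EReal.top_sub_coe, top_le_iff] at h1
    exact EReal.coe_ne_top _ h1
  refine ⟨(ha.aemeasurable_energy hh).aestronglyMeasurable, ?_⟩
  have h3 : ∀ x : ℝ, ‖x‖ₑ = ENNReal.ofReal x + ENNReal.ofReal (-x) := by
    intro x
    rcases le_total 0 x with hx | hx
    · rw [ENNReal.ofReal_of_nonpos (neg_nonpos.2 hx), add_zero, Real.enorm_of_nonneg hx]
    · rw [ENNReal.ofReal_of_nonpos hx, zero_add, ← enorm_neg,
        Real.enorm_of_nonneg (neg_nonneg.2 hx)]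
  unfold HasFiniteIntegral
  simp_rw [h3]
  rw [lintegral_add_left' ((ha.aemeasurable_energy hh).ennreal_ofReal)]
  exact ENNReal.add_lt_top.2 ⟨hpos, hneg⟩

theorem Adm.integrableOn_curveBound (hn : 2 ≤ n) (hκ : 0 < κ) (K : ℝ) (hh : GoodH h h' h'')
    (ha : Adm lam r r')
    (hint : IntegrableOn (fun R => R ^ (n - 1) * PhiHat n κ h (r' R) (r R / R)) (Ioc 0 1)) :
    IntegrableOn (fun R => curveBound n κ K h R (r R) (r' R)) (Ioc 0 1) := by
  set μ := volume.restrict (Ioc (0:ℝ) 1) with hμ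
  have mh := aemeasurable_comp_of_continuousOn_Ioi hh.continuousOn (ha.aemeasurable_det n)
    (ha.ae_det_pos n)
  have mr := ha.aemeasurable
  have mr' := ha.aemeasurable_deriv
  have mv := ha.aemeasurable_ratio
  have mL : AEMeasurable (fun R => logCoeff n (r R / R)) μ := by
    unfold logCoeff
    fun_prop
  set M : ℝ := ((n : ℝ) - 1) * lam ^ (n - 2) with hM
  have hdom : Integrable (fun R => R ^ (n - 1) * PhiHat n κ h (r' R) (r R / R) +
      2 * κ * M * r' R) μ := hint.add (ha.intg.const_mul _)
  have hbounds : ∀ᵐ R ∂μ, ‖κ / n * (R ^ (n - 1) * r' R ^ n)‖ ≤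
        R ^ (n - 1) * PhiHat n κ h (r' R) (r R / R) + 2 * κ * M * r' R ∧
      ‖R ^ (n - 1) * h (r' R * (r R / R) ^ (n - 1))‖ ≤
        R ^ (n - 1) * PhiHat n κ h (r' R) (r R / R) + 2 * κ * M * r' R ∧
      ‖κ * (r' R * r R ^ (n - 1) * |logCoeff n (r R / R)|)‖ ≤
        R ^ (n - 1) * PhiHat n κ h (r' R) (r R / R) + 2 * κ * M * r' R := by
    filter_upwards [ha.ae_pos] with R ⟨hR, hx, hxl, hq⟩
    have hlam : 0 < lam := hx.trans_le hxl
    have h1 := neg_le_logCoeff_term hn hR hx hxl hq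
    have hR0 := hR.1
    have h2 : 0 ≤ κ / n * (R ^ (n - 1) * r' R ^ n) := by positivity
    have h3 : 0 ≤ R ^ (n - 1) * h (r' R * (r R / R) ^ (n - 1)) :=
      mul_nonneg (by positivity) (hh.nonneg _ (by positivity))
    have hn1 : (0:ℝ) ≤ (n : ℝ) - 1 := by
      have : (2:ℝ) ≤ n := by exact_mod_cast hn
      linarith
    have hMq : 0 ≤ M * r' R := by positivity
    have h4 : 0 ≤ κ * (r' R * r R ^ (n - 1) * |logCoeff n (r R / R)|) := by positivity
    have h5 : r' R * r R ^ (n - 1) * |logCoeff n (r R / R)| =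
        |r' R * r R ^ (n - 1) * logCoeff n (r R / R)| := by
      rw [abs_mul (r' R * r R ^ (n - 1)), abs_of_nonneg (by positivity : 0 ≤ r' R * r R ^ (n - 1))]
    have h6 : r' R * r R ^ (n - 1) * |logCoeff n (r R / R)| ≤
        r' R * r R ^ (n - 1) * logCoeff n (r R / R) + 2 * (M * r' R) := by
      rw [h5, abs_le]
      constructor <;> linarith
    have h7 := mul_le_mul_of_nonneg_left h6 hκ.le
    have h8 := mul_le_mul_of_nonneg_left h1 hκ.le
    have h9 := mul_nonneg hκ.le hMq
    rw [energyDensity_eq n κ h hR0, Real.norm_of_nonneg h2, Real.norm_of_nonneg h3,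
      Real.norm_of_nonneg h4]
    refine ⟨?_, ?_, ?_⟩ <;> linarith
  have iA : Integrable (fun R => κ / n * (R ^ (n - 1) * r' R ^ n)) μ :=
    hdom.mono' (by fun_prop) (hbounds.mono fun _ h => h.1)
  have iB : Integrable (fun R => R ^ (n - 1) * h (r' R * (r R / R) ^ (n - 1))) μ :=
    hdom.mono' ((measurable_id.pow_const (n - 1)).aemeasurable.mul mh).aestronglyMeasurable
      (hbounds.mono fun _ h => h.2.1)
  have iL : Integrable (fun R => κ * (r' R * r R ^ (n - 1) * |logCoeff n (r R / R)|)) μ :=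
    hdom.mono' (by
      have : AEMeasurable (fun R => |logCoeff n (r R / R)|) μ := by
        simpa [Real.norm_eq_abs] using mL.norm
      fun_prop) (hbounds.mono fun _ h => h.2.2)
  have iD : Integrable (fun R => r' R * r R ^ (n - 1)) μ := by
    refine (ha.intg.const_mul (lam ^ (n - 1))).mono' (by fun_prop) ?_
    filter_upwards [ha.ae_pos] with R ⟨hR, hx, hxl, hq⟩
    rw [Real.norm_of_nonneg (by positivity), mul_comm]
    gcongr
  have iR : Integrable (fun R : ℝ => R ^ (n - 1)) μ :=
    (continuous_pow (n - 1)).integrableOn_Ioc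
  have := (((iA.const_mul (n * 2 ^ (n - 1))).add
    ((iB.add iR).const_mul (n * 2 ^ (n - 1) * K))).add
    (iL.const_mul (n * 2 ^ (n - 1)))).add (iD.const_mul
      (κ * (n * 2 ^ (n - 1) * ((n : ℝ) - 1) + 2 ^ n * (((n : ℝ) - 1) * 2))))
  refine this.congr (Eventually.of_forall fun R => ?_)
  have hn0 : (n : ℝ) ≠ 0 := by positivity
  simp only [Pi.add_apply, curveBound]
  field_simp
  ring

end Energy

section EulerLagrange

variable {n : ℕ} {κ lam K γ : ℝ} {h h' h'' : ℝ → ℝ} {r r' : ℝ → ℝ}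

theorem curveEnergyDeriv_zero (hn : 2 ≤ n) (κ : ℝ) (h' : ℝ → ℝ) {R : ℝ} (hR : 0 < R)
    (x q ψ χ : ℝ) :
    curveEnergyDeriv n κ h' R x q ψ χ 0 =
      ψ * (q * (R ^ (n - 1) * PhiHat1 n κ h' q (x / R))) +
        χ * (x * (((n : ℝ) - 1) * R ^ (n - 2) * PhiHat2 n κ h' q (x / R))) := by
  obtain ⟨m, rfl⟩ := Nat.exists_eq_add_of_le' hn
  obtain ⟨v, rfl⟩ : ∃ v, x = v * R := ⟨x / R, by field_simp⟩
  have hn0 : ((m : ℝ) + 2) ≠ 0 := by positivity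
  simp only [curveEnergyDeriv, varFactor, varFactorDeriv, logCoeff, PhiHat1, PhiHat2, zero_mul,
    add_zero, one_pow, one_mul, mul_one, Real.log_one, mul_zero, div_one,
    mul_div_cancel_right₀ _ hR.ne', show m + 2 - 1 = m + 1 from rfl, show m + 2 - 2 = m from rfl]
  push_cast
  field_simp
  ring

theorem Adm.abs_primitive_le (ha : Adm lam r r') {ψ : ℝ → ℝ} (hψ1 : ∀ R, |ψ R| ≤ 1) {R : ℝ}
    (hR : R ∈ Icc (0:ℝ) 1) : |∫ t in Ioc 0 R, r' t * ψ t| ≤ r R := by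
  have hsub : Ioc 0 R ⊆ Ioc (0:ℝ) 1 := Ioc_subset_Ioc_right hR.2
  have h1 : ‖∫ t in Ioc 0 R, r' t * ψ t‖ ≤ ∫ t in Ioc 0 R, r' t := by
    refine norm_integral_le_of_norm_le (ha.intg.mono_set hsub) ?_
    filter_upwards [ae_restrict_of_ae_restrict_of_subset hsub ha.derivPos] with t ht
    rw [Real.norm_eq_abs, abs_mul, abs_of_pos ht]
    nlinarith [hψ1 t]
  rw [Real.norm_eq_abs] at h1
  linarith [ha.ftc R hR, ha.c0]

theorem Adm.integrableOn_deriv_mul (ha : Adm lam r r') {ψ : ℝ → ℝ} (hψ : Measurable ψ)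
    (hψ1 : ∀ R, |ψ R| ≤ 1) : IntegrableOn (fun t => r' t * ψ t) (Ioc 0 1) :=
  ha.intg.mul_bdd (c := 1) hψ.aestronglyMeasurable
    (Eventually.of_forall hψ1)

theorem Adm.variation (ha : Adm lam r r') {ψ : ℝ → ℝ} (hψ : Measurable ψ)
    (hψ1 : ∀ R, |ψ R| ≤ 1) (hψ0 : ∫ t in Ioc 0 1, r' t * ψ t = 0) {ε : ℝ} (hε : |ε| ≤ 1 / 2) :
    Adm lam (fun R => r R + ε * ∫ t in Ioc 0 R, r' t * ψ t) (fun R => r' R * (1 + ε * ψ R)) := by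
  have hi := ha.integrableOn_deriv_mul hψ hψ1
  have heq : (fun R => r' R * (1 + ε * ψ R)) = fun R => r' R + ε * (r' R * ψ R) := by
    ext R; ring
  refine ⟨?_, ?_, ?_, ?_, ?_⟩
  · rw [heq]
    exact ha.intg.add (hi.const_mul ε)
  · intro R hR
    have hsub : Ioc 0 R ⊆ Ioc (0:ℝ) 1 := Ioc_subset_Ioc_right hR.2
    rw [heq, integral_add (ha.intg.mono_set hsub) ((hi.mono_set hsub).const_mul ε),
      integral_const_mul, ha.ftc R hR]
    simp
    ring
  · filter_upwards [ha.derivPos] with R hR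
    exact mul_pos hR (by linarith [(one_add_mul_mem_Icc hε (hψ1 R)).1])
  · simp [hψ0, ha.bc]
  · simp [ha.c0]

theorem first_variation_eq_zero (hn : 2 ≤ n) (hκ : 0 < κ) (hh : GoodH h h' h'') (hγ : 0 < γ)
    (hctrl : ∀ d : ℝ, 0 < d → ∀ c : ℝ, |c - 1| ≤ γ → |d * h' (c * d)| ≤ K * (h d + 1))
    (ha : Adm lam r r')
    (hint : IntegrableOn (fun R => R ^ (n - 1) * PhiHat n κ h (r' R) (r R / R)) (Ioc 0 1))
    (hmin : ∀ s s' : ℝ → ℝ, Adm lam s s' → IHatE n κ lam h r r' ≤ IHatE n κ lam h s s')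
    {ψ : ℝ → ℝ} (hψ : Measurable ψ) (hψ1 : ∀ R, |ψ R| ≤ 1)
    (hψ0 : ∫ t in Ioc 0 1, r' t * ψ t = 0)
    (hmeas : AEStronglyMeasurable (fun R => curveEnergyDeriv n κ h' R (r R) (r' R) (ψ R)
      ((∫ t in Ioc 0 R, r' t * ψ t) / r R) 0) (volume.restrict (Ioc 0 1))) :
    ∫ R in Ioc 0 1, curveEnergyDeriv n κ h' R (r R) (r' R) (ψ R)
      ((∫ t in Ioc 0 R, r' t * ψ t) / r R) 0 = 0 := by
  set φ : ℝ → ℝ := fun R => ∫ t in Ioc 0 R, r' t * ψ t with hφ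
  set μ := volume.restrict (Ioc (0:ℝ) 1) with hμ
  set F : ℝ → ℝ → ℝ := fun ε R => curveEnergy n κ h R (r R) (r' R) (ψ R) (φ R / r R) ε with hF
  set F' : ℝ → ℝ → ℝ := fun ε R => curveEnergyDeriv n κ h' R (r R) (r' R) (ψ R) (φ R / r R) ε
    with hF'
  have hχ : ∀ R ∈ Ioc (0:ℝ) 1, |φ R / r R| ≤ 1 := by
    intro R hR
    have hp := ha.pos hR
    rw [abs_div, abs_of_pos hp, div_le_one hp]
    exact ha.abs_primitive_le hψ1 (Ioc_subset_Icc_self hR)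
  have hFeq : ∀ ε : ℝ, |ε| ≤ 1 / 2 → ∀ R ∈ Ioc (0:ℝ) 1,
      R ^ (n - 1) * PhiHat n κ h (r' R * (1 + ε * ψ R)) ((r R + ε * φ R) / R) = F ε R := by
    intro ε hε R hR
    have hp := ha.pos hR
    have h1 : r R + ε * φ R = r R * (1 + ε * (φ R / r R)) := by field_simp
    rw [h1]
    exact energyDensity_scaled n κ h hR.1 hp hε (hχ R hR)
  have hadm : ∀ ε : ℝ, |ε| ≤ 1 / 2 → Adm lam (fun R => r R + ε * φ R)
      (fun R => r' R * (1 + ε * ψ R)) := fun ε hε => ha.variation hψ hψ1 hψ0 hε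
  have hFmeas : ∀ ε : ℝ, |ε| ≤ 1 / 2 → AEStronglyMeasurable (F ε) μ := by
    intro ε hε
    refine (((hadm ε hε).aemeasurable_energy (n := n) (κ := κ) hh).congr ?_).aestronglyMeasurable
    filter_upwards [ae_restrict_mem measurableSet_Ioc] with R hR
    exact hFeq ε hε R hR
  have hF0 : Integrable (F 0) μ := by
    refine hint.congr ?_
    filter_upwards [ae_restrict_mem measurableSet_Ioc] with R hR
    simpa using hFeq 0 (by norm_num) R hR
  set ε₀ : ℝ := min (1 / 2) (γ / (n * 2 ^ (n - 1))) with hε₀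
  have hM : (0:ℝ) < n * 2 ^ (n - 1) := by positivity
  have hε₀pos : 0 < ε₀ := lt_min (by norm_num) (by positivity)
  have hε₀1 : ∀ ε : ℝ, |ε| ≤ ε₀ → |ε| ≤ 1 / 2 := fun ε hε => hε.trans (min_le_left _ _)
  have hε₀2 : ∀ ε : ℝ, |ε| ≤ ε₀ → n * 2 ^ (n - 1) * |ε| ≤ γ := by
    intro ε hε
    have := hε.trans (min_le_right _ _)
    rwa [le_div_iff₀ hM, mul_comm] at this
  have hball : ∀ ε : ℝ, ε ∈ Metric.ball (0:ℝ) ε₀ → |ε| ≤ ε₀ := by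
    intro ε hε
    rw [mem_ball_zero_iff, Real.norm_eq_abs] at hε
    exact hε.le
  have hbound : ∀ᵐ R ∂μ, ∀ ε ∈ Metric.ball (0:ℝ) ε₀,
      ‖F' ε R‖ ≤ curveBound n κ K h R (r R) (r' R) := by
    filter_upwards [ha.ae_pos] with R ⟨hR, hx, _, hq⟩ ε hε
    exact abs_curveEnergyDeriv_le hn hκ hctrl hR.1 hx hq (hε₀1 ε (hball ε hε))
      (hε₀2 ε (hball ε hε)) (hψ1 R) (hχ R hR)
  have hdiff : ∀ᵐ R ∂μ, ∀ ε ∈ Metric.ball (0:ℝ) ε₀,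
      HasDerivAt (F · R) (F' ε R) ε := by
    filter_upwards [ha.ae_pos] with R ⟨hR, hx, _, hq⟩ ε hε
    exact hasDerivAt_curveEnergy hn hh hR.1 hx hq (hε₀1 ε (hball ε hε)) (hψ1 R) (hχ R hR)
  have hBint : Integrable (fun R => curveBound n κ K h R (r R) (r' R)) μ :=
    ha.integrableOn_curveBound hn hκ K hh hint
  have hnhds : Metric.ball (0:ℝ) ε₀ ∈ nhds (0:ℝ) := Metric.ball_mem_nhds 0 hε₀pos
  have hderiv := (hasDerivAt_integral_of_dominated_loc_of_deriv_le (μ := μ) (F := F) (F' := F')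
    (x₀ := 0) hnhds
    (by filter_upwards [hnhds] with ε hε using hFmeas ε (hε₀1 ε (hball ε hε)))
    hF0 hmeas hbound hBint hdiff).2
  have hFint : ∀ ε ∈ Metric.ball (0:ℝ) ε₀, Integrable (F ε) μ := by
    intro ε hε
    have h1 : Integrable (fun R => F ε R - F 0 R) μ := by
      refine (hBint.mul_const |ε|).mono'
        ((hFmeas ε (hε₀1 ε (hball ε hε))).sub (hFmeas 0 (by norm_num))) ?_
      filter_upwards [hbound, hdiff] with R hb hd
      have := (convex_ball (0:ℝ) ε₀).norm_image_sub_le_of_norm_hasDerivWithin_le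
        (f := (F · R)) (f' := (F' · R)) (fun e he => (hd e he).hasDerivWithinAt) hb
        (Metric.mem_ball_self hε₀pos) hε
      simpa using this
    refine (h1.add hF0).congr (Eventually.of_forall fun R => ?_)
    simp
  have hlocmin : IsLocalMin (fun ε => ∫ R, F ε R ∂μ) 0 := by
    filter_upwards [hnhds] with ε hε
    have hε' := hε₀1 ε (hball ε hε)
    have hle := hmin _ _ (hadm ε hε')
    have hsint : IntegrableOn (fun R => R ^ (n - 1) *
        PhiHat n κ h (r' R * (1 + ε * ψ R)) ((r R + ε * φ R) / R)) (Ioc 0 1) := by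
      refine (hFint ε hε).congr ?_
      filter_upwards [ae_restrict_mem measurableSet_Ioc] with R hR
      exact (hFeq ε hε' R hR).symm
    rw [IHatE_eq_coe hint, IHatE_eq_coe hsint, EReal.coe_le_coe_iff, sub_le_sub_iff_right,
      setIntegral_congr_fun measurableSet_Ioc (hFeq ε hε')] at hle
    have h0 : ∫ R in Ioc (0:ℝ) 1, R ^ (n - 1) * PhiHat n κ h (r' R) (r R / R) =
        ∫ R in Ioc (0:ℝ) 1, F 0 R := by
      refine setIntegral_congr_fun measurableSet_Ioc fun R hR => ?_
      simpa using hFeq 0 (by norm_num) R hR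
    rwa [h0] at hle
  exact hlocmin.hasDerivAt_eq_zero hderiv

/-- The radial stress `R^{n-1} Φ̂_{,1}` along a deformation. -/
def stressTerm (n : ℕ) (κ : ℝ) (h' r r' : ℝ → ℝ) (R : ℝ) : ℝ :=
  R ^ (n - 1) * PhiHat1 n κ h' (r' R) (r R / R)

/-- The right-hand side `(n-1) R^{n-2} Φ̂_{,2}` along a deformation. -/
def forceTerm (n : ℕ) (κ : ℝ) (h' r r' : ℝ → ℝ) (R : ℝ) : ℝ :=
  ((n : ℝ) - 1) * R ^ (n - 2) * PhiHat2 n κ h' (r' R) (r R / R)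

theorem Adm.aemeasurable_stressTerm (ha : Adm lam r r') (hh : GoodH h h' h'') :
    AEMeasurable (stressTerm n κ h' r r') (volume.restrict (Ioc 0 1)) := by
  have h1 := aemeasurable_comp_of_continuousOn_Ioi hh.continuousOn_deriv (ha.aemeasurable_det n)
    (ha.ae_det_pos n)
  have h2 := ha.aemeasurable_deriv
  have h3 := ha.aemeasurable_ratio
  have h5 : AEMeasurable (fun R => κ * (r R / R) ^ (n - 1) *
      (((n : ℝ) - 1) / n + ((n : ℝ) - 1) * Real.log (r R / R))) (volume.restrict (Ioc 0 1)) := by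
    fun_prop
  exact (measurable_id.pow_const (n - 1)).aemeasurable.mul
    ((((h2.pow_const (n - 1)).const_mul κ).add ((h3.pow_const (n - 1)).mul h1)).add h5)

theorem Adm.aemeasurable_forceTerm (ha : Adm lam r r') (hh : GoodH h h' h'') :
    AEMeasurable (forceTerm n κ h' r r') (volume.restrict (Ioc 0 1)) := by
  have h1 := aemeasurable_comp_of_continuousOn_Ioi hh.continuousOn_deriv (ha.aemeasurable_det n)
    (ha.ae_det_pos n)
  have h2 := ha.aemeasurable_deriv
  have h3 := ha.aemeasurable_ratio
  have h5 : AEMeasurable (fun R => κ * (((n : ℝ) - 1) * (1 / n + Real.log (r R / R))))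
      (volume.restrict (Ioc 0 1)) := by
    fun_prop
  exact ((measurable_id.pow_const (n - 2)).aemeasurable.const_mul _).mul
    ((h2.mul (h3.pow_const (n - 2))).mul ((h1.add_const κ).add h5))

theorem Adm.integrableOn_stressTerm (hn : 2 ≤ n) (hκ : 0 < κ) (hh : GoodH h h' h'') (hγ : 0 < γ)
    (hctrl : ∀ d : ℝ, 0 < d → ∀ c : ℝ, |c - 1| ≤ γ → |d * h' (c * d)| ≤ K * (h d + 1))
    (ha : Adm lam r r')
    (hint : IntegrableOn (fun R => R ^ (n - 1) * PhiHat n κ h (r' R) (r R / R)) (Ioc 0 1)) :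
    IntegrableOn (fun R => r' R * stressTerm n κ h' r r' R) (Ioc 0 1) := by
  refine (ha.integrableOn_curveBound hn hκ K hh hint).mono'
    (ha.aemeasurable_deriv.mul (ha.aemeasurable_stressTerm hh)).aestronglyMeasurable ?_
  filter_upwards [ha.ae_pos] with R ⟨hR, hx, _, hq⟩
  have := abs_curveEnergyDeriv_le hn hκ hctrl (ε := 0) (ψ := 1) (χ := 0) hR.1 hx hq
    (by norm_num) (by simpa using hγ.le) (by norm_num) (by norm_num)
  simpa only [curveEnergyDeriv_zero hn κ h' hR.1, one_mul, zero_mul, add_zero, Real.norm_eq_abs,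
    stressTerm] using this

theorem Adm.integrableOn_mul_forceTerm (hn : 2 ≤ n) (hκ : 0 < κ) (hh : GoodH h h' h'')
    (hγ : 0 < γ)
    (hctrl : ∀ d : ℝ, 0 < d → ∀ c : ℝ, |c - 1| ≤ γ → |d * h' (c * d)| ≤ K * (h d + 1))
    (ha : Adm lam r r')
    (hint : IntegrableOn (fun R => R ^ (n - 1) * PhiHat n κ h (r' R) (r R / R)) (Ioc 0 1)) :
    IntegrableOn (fun R => r R * forceTerm n κ h' r r' R) (Ioc 0 1) := by
  refine (ha.integrableOn_curveBound hn hκ K hh hint).mono'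
    (ha.aemeasurable.mul (ha.aemeasurable_forceTerm hh)).aestronglyMeasurable ?_
  filter_upwards [ha.ae_pos] with R ⟨hR, hx, _, hq⟩
  have := abs_curveEnergyDeriv_le hn hκ hctrl (ε := 0) (ψ := 0) (χ := 1) hR.1 hx hq
    (by norm_num) (by simpa using hγ.le) (by norm_num) (by norm_num)
  simpa only [curveEnergyDeriv_zero hn κ h' hR.1, one_mul, zero_mul, zero_add, Real.norm_eq_abs,
    forceTerm] using this

theorem Adm.integrableOn_forceTerm (hn : 2 ≤ n) (hκ : 0 < κ) (hh : GoodH h h' h'') (hγ : 0 < γ)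
    (hctrl : ∀ d : ℝ, 0 < d → ∀ c : ℝ, |c - 1| ≤ γ → |d * h' (c * d)| ≤ K * (h d + 1))
    (ha : Adm lam r r')
    (hint : IntegrableOn (fun R => R ^ (n - 1) * PhiHat n κ h (r' R) (r R / R)) (Ioc 0 1))
    {a : ℝ} (ha0 : 0 < a) :
    IntegrableOn (forceTerm n κ h' r r') (Ioc a 1) := by
  have hsub : Ioc a 1 ⊆ Ioc (0:ℝ) 1 := Ioc_subset_Ioc_left ha0.le
  have h1 := (ha.integrableOn_mul_forceTerm hn hκ hh hγ hctrl hint).mono_set hsub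
  have hsub' : Icc a 1 ⊆ Ioc (0:ℝ) 1 := fun x hx => ⟨ha0.trans_le hx.1, hx.2⟩
  have hcont : ContinuousOn (fun R => (r R)⁻¹) (Icc a 1) :=
    (ha.continuousOn.mono (hsub'.trans Ioc_subset_Icc_self)).inv₀
      fun R hR => (ha.pos (hsub' hR)).ne'
  have h2 := ((integrableOn_Icc_iff_integrableOn_Ioc (by finiteness)).2 h1).continuousOn_mul
    hcont isCompact_Icc
  refine (h2.mono_set Ioc_subset_Icc_self).congr_fun (fun R hR => ?_) measurableSet_Ioc
  have := (ha.pos (hsub hR)).ne'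
  simp only
  field_simp

theorem weak_euler_lagrange (hn : 2 ≤ n) (hκ : 0 < κ) (hh : GoodH h h' h'') (hγ : 0 < γ)
    (hctrl : ∀ d : ℝ, 0 < d → ∀ c : ℝ, |c - 1| ≤ γ → |d * h' (c * d)| ≤ K * (h d + 1))
    (ha : Adm lam r r')
    (hint : IntegrableOn (fun R => R ^ (n - 1) * PhiHat n κ h (r' R) (r R / R)) (Ioc 0 1))
    (hmin : ∀ s s' : ℝ → ℝ, Adm lam s s' → IHatE n κ lam h r r' ≤ IHatE n κ lam h s s')
    {ψ : ℝ → ℝ} (hψ : Measurable ψ) (hψ1 : ∀ R, |ψ R| ≤ 1)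
    (hψ0 : ∫ t in Ioc 0 1, r' t * ψ t = 0) :
    ∫ R in Ioc 0 1, (r' R * ψ R * stressTerm n κ h' r r' R +
      forceTerm n κ h' r r' R * ∫ t in Ioc 0 R, r' t * ψ t) = 0 := by
  have heq : ∀ R ∈ Ioc (0:ℝ) 1, r' R * ψ R * stressTerm n κ h' r r' R +
      forceTerm n κ h' r r' R * ∫ t in Ioc 0 R, r' t * ψ t =
      curveEnergyDeriv n κ h' R (r R) (r' R) (ψ R) ((∫ t in Ioc 0 R, r' t * ψ t) / r R) 0 := by
    intro R hR
    have hp := (ha.pos hR).ne'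
    rw [curveEnergyDeriv_zero hn κ h' hR.1, stressTerm, forceTerm]
    field_simp
  rw [setIntegral_congr_fun measurableSet_Ioc heq]
  refine first_variation_eq_zero hn hκ hh hγ hctrl ha hint hmin hψ hψ1 hψ0 ?_
  have hφ : AEMeasurable (fun R => ∫ t in Ioc 0 R, r' t * ψ t) (volume.restrict (Ioc 0 1)) := by
    have : ContinuousOn (fun R => ∫ t in Ioc 0 R, r' t * ψ t) (Icc 0 1) :=
      intervalIntegral.continuousOn_primitive
        ((integrableOn_Icc_iff_integrableOn_Ioc (by finiteness)).2
          (ha.integrableOn_deriv_mul hψ hψ1))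
    exact (this.mono Ioc_subset_Icc_self).aemeasurable measurableSet_Ioc
  have hm := ((ha.aemeasurable_deriv.mul hψ.aemeasurable).mul
    (ha.aemeasurable_stressTerm (n := n) (κ := κ) hh)).add
      ((ha.aemeasurable_forceTerm (n := n) (κ := κ) hh).mul hφ)
  refine (hm.congr ?_).aestronglyMeasurable
  filter_upwards [ae_restrict_mem measurableSet_Ioc] with R hR
  exact heq R hR

theorem ae_stressTerm_add_integral_eq_const (hn : 2 ≤ n) (hκ : 0 < κ) (hh : GoodH h h' h'')
    (hγ : 0 < γ)
    (hctrl : ∀ d : ℝ, 0 < d → ∀ c : ℝ, |c - 1| ≤ γ → |d * h' (c * d)| ≤ K * (h d + 1))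
    (ha : Adm lam r r')
    (hint : IntegrableOn (fun R => R ^ (n - 1) * PhiHat n κ h (r' R) (r R / R)) (Ioc 0 1))
    (hmin : ∀ s s' : ℝ → ℝ, Adm lam s s' → IHatE n κ lam h r r' ≤ IHatE n κ lam h s s')
    {a : ℝ} (ha0 : 0 < a) (ha1 : a < 1) :
    ∃ c : ℝ, ∀ᵐ R ∂volume.restrict (Ioc a 1),
      stressTerm n κ h' r r' R + ∫ x in Ioc R 1, forceTerm n κ h' r r' x = c := by
  set E := stressTerm n κ h' r r' with hE
  set W := forceTerm n κ h' r r' with hW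
  have hsub : Ioc a 1 ⊆ Ioc (0:ℝ) 1 := Ioc_subset_Ioc_left ha0.le
  have hWint : IntegrableOn W (Ioc a 1) := ha.integrableOn_forceTerm hn hκ hh hγ hctrl hint ha0
  have hEint : IntegrableOn (fun R => r' R * E R) (Ioc a 1) :=
    (ha.integrableOn_stressTerm hn hκ hh hγ hctrl hint).mono_set hsub
  have hr' : IntegrableOn r' (Ioc a 1) := ha.intg.mono_set hsub
  have hpos : ∀ᵐ R ∂volume.restrict (Ioc a 1), 0 < r' R :=
    ae_restrict_of_ae_restrict_of_subset hsub ha.derivPos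
  have hHc : ContinuousOn (fun R => ∫ x in Ioc R 1, W x) (Icc a 1) :=
    continuousOn_integral_Ioc_left hWint
  have hmulH : ∀ u : ℝ → ℝ, IntegrableOn u (Ioc a 1) →
      IntegrableOn (fun R => u R * ∫ x in Ioc R 1, W x) (Ioc a 1) := by
    intro u hu
    exact (((integrableOn_Icc_iff_integrableOn_Ioc (by finiteness)).2 hu).mul_continuousOn
      hHc isCompact_Icc).mono_set Ioc_subset_Icc_self
  refine ae_eq_const_of_weighted (w := r') hr' hpos ?_ ?_
  · refine (hEint.add (hmulH r' hr')).congr (Eventually.of_forall fun R => ?_)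
    simp only [Pi.add_apply]
    ring
  intro A hA
  set T := ∫ y in Ioc a 1, r' y with hT
  have hTpos : 0 < T := ha.setIntegral_pos ha0.le ha1 le_rfl
  set m := (∫ y in A, r' y ∂volume.restrict (Ioc a 1)) / T with hm
  have hm0 : 0 ≤ m :=
    div_nonneg (integral_nonneg_of_ae ((ae_restrict_of_ae hpos).mono fun _ h => h.le)) hTpos.le
  have hm1 : m ≤ 1 := by
    rw [hm, div_le_one hTpos]
    exact setIntegral_le_integral hr' (hpos.mono fun _ h => h.le)
  set b : ℝ → ℝ := fun x => A.indicator 1 x - m with hb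
  have hbm : Measurable b := (measurable_one.indicator hA).sub_const m
  have hb1 : ∀ x, |b x| ≤ 1 := by
    intro x
    rw [abs_le]
    by_cases hx : x ∈ A <;> simp [hb, hx] <;> constructor <;> linarith
  set ψ : ℝ → ℝ := (Ioc a 1).indicator b with hψ
  have hψm : Measurable ψ := hbm.indicator measurableSet_Ioc
  have hψ1 : ∀ x, |ψ x| ≤ 1 := by
    intro x
    by_cases hx : x ∈ Ioc a 1
    · simpa [hψ, hx] using hb1 x
    · simp [hψ, hx]
  have hψin : ∀ x ∈ Ioc a 1, ψ x = b x := fun x hx => Set.indicator_of_mem hx b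
  have hψout : ∀ x, x ∉ Ioc a 1 → ψ x = 0 := fun x hx => Set.indicator_of_notMem hx b
  have hu : IntegrableOn (fun t => r' t * b t) (Ioc a 1) :=
    hr'.mul_bdd (c := 1) hbm.aestronglyMeasurable (Eventually.of_forall hb1)
  have hprim : ∀ R, a ≤ R → R ≤ 1 →
      ∫ t in Ioc 0 R, r' t * ψ t = ∫ t in Ioc a R, r' t * b t := by
    intro R haR hR1
    rw [setIntegral_eq_of_subset_of_forall_sdiff_eq_zero measurableSet_Ioc
      (Ioc_subset_Ioc_left ha0.le : Ioc a R ⊆ Ioc 0 R)]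
    · refine setIntegral_congr_fun measurableSet_Ioc fun t ht => ?_
      rw [hψin t ⟨ht.1, ht.2.trans hR1⟩]
    · intro t ht
      rw [hψout t fun h => ht.2 ⟨h.1, ht.1.2⟩, mul_zero]
  have hub : ∫ t in Ioc a 1, r' t * b t = 0 := by
    have h1 : ∀ t, r' t * b t = A.indicator r' t - m * r' t := by
      intro t
      by_cases ht : t ∈ A <;> simp [hb, ht] <;> ring
    simp_rw [h1]
    rw [integral_sub (hr'.indicator hA) (hr'.const_mul m), integral_indicator hA,
      integral_const_mul, ← hT, hm, div_mul_cancel₀ _ hTpos.ne', sub_self]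
  have hmain := weak_euler_lagrange hn hκ hh hγ hctrl ha hint hmin hψm hψ1
    ((hprim 1 ha1.le le_rfl).trans hub)
  rw [setIntegral_eq_of_subset_of_forall_sdiff_eq_zero measurableSet_Ioc hsub] at hmain
  swap
  · intro R hR
    have hRa : R ≤ a := by
      by_contra hcon
      exact hR.2 ⟨not_le.1 hcon, hR.1.2⟩
    rw [hψout R hR.2, setIntegral_eq_zero_of_forall_eq_zero]
    · simp
    · intro t ht
      rw [hψout t fun h => absurd (h.1.trans_le ht.2) (not_lt.2 hRa), mul_zero]
  have h2 : ∀ R ∈ Ioc a 1, r' R * ψ R * E R + W R * ∫ t in Ioc 0 R, r' t * ψ t =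
      r' R * b R * E R + W R * ∫ t in Ioc a R, r' t * b t := by
    intro R hR
    rw [hψin R hR, hprim R hR.1.le hR.2]
  rw [setIntegral_congr_fun measurableSet_Ioc h2] at hmain
  have hub2 : IntegrableOn (fun R => r' R * b R * E R) (Ioc a 1) := by
    refine (hEint.mul_bdd (c := 1) hbm.aestronglyMeasurable
      (Eventually.of_forall hb1)).congr (Eventually.of_forall fun R => ?_)
    simp only
    ring
  have hub3 : IntegrableOn (fun R => W R * ∫ t in Ioc a R, r' t * b t) (Ioc a 1) := by
    have hc : ContinuousOn (fun R => ∫ t in Ioc a R, r' t * b t) (Icc a 1) :=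
      intervalIntegral.continuousOn_primitive
        ((integrableOn_Icc_iff_integrableOn_Ioc (by finiteness)).2 hu)
    exact (((integrableOn_Icc_iff_integrableOn_Ioc (by finiteness)).2 hWint).mul_continuousOn
      hc isCompact_Icc).mono_set Ioc_subset_Icc_self
  rw [integral_add hub2 hub3, setIntegral_mul_primitive hu hWint,
    ← integral_add hub2 (hmulH _ hu)] at hmain
  rw [← hmain]
  refine integral_congr_ae (Eventually.of_forall fun R => ?_)
  simp only [hb]
  ring

theorem ae_stressTerm_eq (hn : 2 ≤ n) (hκ : 0 < κ) (hh : GoodH h h' h'')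
    (hγ : 0 < γ)
    (hctrl : ∀ d : ℝ, 0 < d → ∀ c : ℝ, |c - 1| ≤ γ → |d * h' (c * d)| ≤ K * (h d + 1))
    (ha : Adm lam r r')
    (hint : IntegrableOn (fun R => R ^ (n - 1) * PhiHat n κ h (r' R) (r R / R)) (Ioc 0 1))
    (hmin : ∀ s s' : ℝ → ℝ, Adm lam s s' → IHatE n κ lam h r r' ≤ IHatE n κ lam h s s') :
    ∃ c : ℝ, ∀ᵐ R ∂volume.restrict (Ioc (0:ℝ) 1),
      stressTerm n κ h' r r' R = c - ∫ x in Ioc R 1, forceTerm n κ h' r r' x := by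
  have hex := fun (a : ℝ) (h0 : 0 < a) (h1 : a < 1) =>
    ae_stressTerm_add_integral_eq_const hn hκ hh hγ hctrl ha hint hmin h0 h1
  obtain ⟨c, hc⟩ := hex (1 / 2) (by norm_num) (by norm_num)
  refine ⟨c, ?_⟩
  have hall : ∀ k : ℕ, ∀ᵐ R ∂volume.restrict (Ioc ((1:ℝ) / (k + 2)) 1),
      stressTerm n κ h' r r' R = c - ∫ x in Ioc R 1, forceTerm n κ h' r r' x := by
    intro k
    have hk : (1:ℝ) / (k + 2) ≤ 1 / 2 := by
      apply one_div_le_one_div_of_le <;> linarith [(Nat.cast_nonneg k : (0:ℝ) ≤ k)]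
    obtain ⟨c', hc'⟩ := hex (1 / (k + 2)) (by positivity) (by linarith)
    have hcc : c = c' := by
      have h1 := ae_restrict_of_ae_restrict_of_subset (Ioc_subset_Ioc_left hk) hc'
      have hne : (ae (volume.restrict (Ioc (1 / 2 : ℝ) 1))).NeBot := by
        rw [ae_neBot]
        intro h0
        have := congrArg (fun ν => ν univ) h0
        norm_num at this
      obtain ⟨R, hR1, hR2⟩ := (hc.and h1).exists
      exact hR1.symm.trans hR2
    rw [hcc]
    filter_upwards [hc'] with R hR
    linarith
  have hU : Ioc (0:ℝ) 1 = ⋃ k : ℕ, Ioc ((1:ℝ) / (k + 2)) 1 := by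
    ext x
    simp only [mem_iUnion, mem_Ioc]
    constructor
    · rintro ⟨h0, h1⟩
      obtain ⟨k, hk⟩ := exists_nat_one_div_lt h0
      refine ⟨k, lt_of_le_of_lt ?_ hk, h1⟩
      apply one_div_le_one_div_of_le <;> linarith [(Nat.cast_nonneg k : (0:ℝ) ≤ k)]
    · rintro ⟨k, h0, h1⟩
      exact ⟨lt_trans (by positivity) h0, h1⟩
  rw [hU, ae_restrict_iUnion_iff]
  exact hall

end EulerLagrange

section Inversion

variable {n : ℕ} {κ : ℝ} {h h' h'' : ℝ → ℝ}

theorem GoodH.strictMonoOn_deriv (hh : GoodH h h' h'') : StrictMonoOn h' (Ioi 0) := by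
  refine strictMonoOn_of_deriv_pos (convex_Ioi 0) hh.continuousOn_deriv fun d hd => ?_
  rw [interior_Ioi] at hd
  rw [(hh.deriv2 d hd).deriv]
  exact hh.hpp_pos d hd

theorem Phi1_strictMonoOn (hκ : 0 < κ) (hh : GoodH h h' h'') {v : ℝ} (hv : 0 < v) :
    StrictMonoOn (fun q => Phi1 n κ h' q v) (Ioi 0) := by
  intro p hp q hq hpq
  have hp' : 0 < p := hp
  have hq' : 0 < q := hq
  have hvn : 0 < v ^ (n - 1) := by positivity
  have h1 : h' (p * v ^ (n - 1)) < h' (q * v ^ (n - 1)) :=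
    hh.strictMonoOn_deriv (mul_pos hp' hvn) (mul_pos hq' hvn) (mul_lt_mul_of_pos_right hpq hvn)
  have h2 : p ^ (n - 1) ≤ q ^ (n - 1) := pow_le_pow_left₀ hp'.le hpq.le _
  exact add_lt_add_of_le_of_lt (mul_le_mul_of_nonneg_left h2 hκ.le)
    (mul_lt_mul_of_pos_left h1 hvn)

theorem Phi1_continuousOn (hh : GoodH h h' h'') {v : ℝ} (hv : 0 < v) :
    ContinuousOn (fun q => Phi1 n κ h' q v) (Ioi 0) := by
  have h1 : ContinuousOn (fun q => h' (q * v ^ (n - 1))) (Ioi 0) :=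
    hh.continuousOn_deriv.comp (by fun_prop) fun q (hq : 0 < q) =>
      mul_pos hq (pow_pos hv _)
  exact (continuousOn_const.mul (continuousOn_id.pow (n - 1))).add (continuousOn_const.mul h1)

theorem exists_Phi1_eq (hκ : 0 < κ) (hh : GoodH h h' h'') {v : ℝ} (hv : 0 < v) (y : ℝ) :
    ∃ q, 0 < q ∧ Phi1 n κ h' q v = y := by
  have hvn : 0 < v ^ (n - 1) := by positivity
  have hlow : ∃ q ∈ Ioi (0:ℝ), Phi1 n κ h' q v ≤ y := by
    have h1 := hh.dlim_zero.eventually (eventually_le_atBot ((y - κ) / v ^ (n - 1)))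
    have h2 : ∀ᶠ t in nhdsWithin (0:ℝ) (Ioi 0), t ≤ v ^ (n - 1) :=
      mem_nhdsWithin_of_mem_nhds (Iic_mem_nhds hvn)
    obtain ⟨t, ⟨ht1, ht2⟩, ht0⟩ := ((h1.and h2).and self_mem_nhdsWithin).exists
    have ht0' : 0 < t := ht0
    have hq : 0 < t / v ^ (n - 1) := by positivity
    refine ⟨t / v ^ (n - 1), hq, ?_⟩
    unfold Phi1
    rw [div_mul_cancel₀ _ hvn.ne']
    rw [le_div_iff₀ hvn] at ht1
    have h3 : (t / v ^ (n - 1)) ^ (n - 1) ≤ 1 :=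
      pow_le_one₀ hq.le ((div_le_one hvn).2 ht2)
    nlinarith
  have hhigh : ∃ q ∈ Ioi (0:ℝ), y ≤ Phi1 n κ h' q v := by
    obtain ⟨t, ht1, ht0⟩ := ((hh.dlim_top.eventually
      (eventually_ge_atTop (y / v ^ (n - 1)))).and (eventually_gt_atTop 0)).exists
    have hq : 0 < t / v ^ (n - 1) := by positivity
    refine ⟨t / v ^ (n - 1), hq, ?_⟩
    unfold Phi1
    rw [div_mul_cancel₀ _ hvn.ne']
    rw [div_le_iff₀ hvn] at ht1
    have h3 : 0 ≤ κ * (t / v ^ (n - 1)) ^ (n - 1) := by positivity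
    linarith
  obtain ⟨q₁, hq₁, h1⟩ := hlow
  obtain ⟨q₂, hq₂, h2⟩ := hhigh
  obtain ⟨q, hq, hqy⟩ := isPreconnected_Ioi.intermediate_value hq₁ hq₂
    (Phi1_continuousOn (n := n) (κ := κ) hh hv) ⟨h1, h2⟩
  exact ⟨q, hq, hqy⟩

theorem continuousOn_of_Phi1_eq (hκ : 0 < κ) (hh : GoodH h h' h'') {S : Set ℝ}
    {v y ρ : ℝ → ℝ} (hv : ContinuousOn v S) (hy : ContinuousOn y S) (hvpos : ∀ R ∈ S, 0 < v R)
    (hρ : ∀ R ∈ S, 0 < ρ R) (heq : ∀ R ∈ S, Phi1 n κ h' (ρ R) (v R) = y R) :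
    ContinuousOn ρ S := by
  have hcont : ∀ q : ℝ, 0 < q → ContinuousOn (fun R => Phi1 n κ h' q (v R)) S := by
    intro q hq
    have h1 : ContinuousOn (fun R => h' (q * v R ^ (n - 1))) S :=
      hh.continuousOn_deriv.comp (by fun_prop) fun R hR =>
        mul_pos hq (pow_pos (hvpos R hR) _)
    exact continuousOn_const.add ((hv.pow (n - 1)).mul h1)
  intro R₀ hR₀
  refine tendsto_order.2 ⟨fun q hq => ?_, fun q hq => ?_⟩
  · by_cases hq0 : 0 < q
    · have h1 : Phi1 n κ h' q (v R₀) < y R₀ := by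
        rw [← heq R₀ hR₀]
        exact Phi1_strictMonoOn hκ hh (hvpos R₀ hR₀) hq0 (hρ R₀ hR₀) hq
      filter_upwards [(hcont q hq0 R₀ hR₀).eventually_lt (hy R₀ hR₀) h1,
        self_mem_nhdsWithin] with R hR hRS
      rw [← heq R hRS] at hR
      exact ((Phi1_strictMonoOn hκ hh (hvpos R hRS)).lt_iff_lt hq0 (hρ R hRS)).1 hR
    · filter_upwards [self_mem_nhdsWithin] with R hRS
      exact lt_of_le_of_lt (not_lt.1 hq0) (hρ R hRS)
  · have hq0 : 0 < q := (hρ R₀ hR₀).trans hq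
    have h1 : y R₀ < Phi1 n κ h' q (v R₀) := by
      rw [← heq R₀ hR₀]
      exact Phi1_strictMonoOn hκ hh (hvpos R₀ hR₀) (hρ R₀ hR₀) hq0 hq
    filter_upwards [(hy R₀ hR₀).eventually_lt (hcont q hq0 R₀ hR₀) h1,
      self_mem_nhdsWithin] with R hR hRS
    rw [← heq R hRS] at hR
    exact ((Phi1_strictMonoOn hκ hh (hvpos R hRS)).lt_iff_lt (hρ R hRS) hq0).1 hR

theorem stressTerm_eq (n : ℕ) (κ : ℝ) (h' r ρ : ℝ → ℝ) {R : ℝ} (hR : 0 < R) :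
    stressTerm n κ h' r ρ R = R ^ (n - 1) * Phi1 n κ h' (ρ R) (r R / R) +
      κ * (r R ^ (n - 1) * logCoeff n (r R / R)) := by
  have hxR : R ^ (n - 1) * (r R / R) ^ (n - 1) = r R ^ (n - 1) := by
    rw [← mul_pow, mul_div_cancel₀ _ hR.ne']
  unfold stressTerm PhiHat1 Phi1 logCoeff
  rw [← hxR]
  ring

/-- The modification of the energy contributes equally to both sides of the equilibrium
equation. -/
theorem hasDerivWithinAt_logCoeff_term (hn : 2 ≤ n) {r ρ : ℝ → ℝ} {S : Set ℝ} {R : ℝ}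
    (hR : 0 < R) (hrR : 0 < r R) (hr : HasDerivWithinAt r (ρ R) S R) :
    HasDerivWithinAt (fun s => κ * (r s ^ (n - 1) * logCoeff n (r s / s)))
      (forceTerm n κ h' r ρ R -
        ((n : ℝ) - 1) * R ^ (n - 2) * Phi2 n κ h' (ρ R) (r R / R)) S R := by
  obtain ⟨m, rfl⟩ := Nat.exists_eq_add_of_le' hn
  have hdiv := hr.div (hasDerivWithinAt_id R S) hR.ne'
  have hlog := ((hdiv.log (div_pos hrR hR).ne').const_mul
    (((m + 2 : ℕ) : ℝ) - 1)).const_add ((((m + 2 : ℕ) : ℝ) - 1) / ((m + 2 : ℕ) : ℝ))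
  refine (((hr.pow (m + 1)).mul hlog).const_mul κ).congr_deriv ?_
  simp only [forceTerm, PhiHat2, Phi2, show m + 2 - 1 = m + 1 from rfl,
    show m + 2 - 2 = m from rfl, show m + 1 - 1 = m from rfl, Pi.pow_apply, Pi.div_apply, id_eq]
  obtain ⟨v, hv⟩ : ∃ v, r R / R = v := ⟨_, rfl⟩
  have hrv : r R = v * R := (div_eq_iff hR.ne').1 hv
  have hvpos : 0 < v := hv ▸ div_pos hrR hR
  rw [hv, hrv]
  push_cast
  field_simp
  ring

end Inversion

/-- a minimizer of the modified functional `Î` over `𝒜_λ` solves the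
original (unmodified) radial equilibrium equation. -/
theorem stmt12 (n : ℕ) (hn : 2 ≤ n) (κ : ℝ) (hκ : 0 < κ)
    (h h' h'' : ℝ → ℝ) (hh : GoodH h h' h'')
    (K γ₀ : ℝ) (hK : 0 < K) (hγ₀ : 0 < γ₀)
    (hctrl : ∀ d : ℝ, 0 < d → ∀ c : ℝ, |c - 1| ≤ γ₀ → |d * h' (c * d)| ≤ K * (h d + 1))
    (lam : ℝ) (hlam : 0 < lam) (r r' : ℝ → ℝ) (hadm : Adm lam r r')
    (hmin : ∀ s s' : ℝ → ℝ, Adm lam s s' → IHatE n κ lam h r r' ≤ IHatE n κ lam h s s') :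
    ∃ ρ : ℝ → ℝ, ContinuousOn ρ (Set.Ioc 0 1) ∧
      (∀ R ∈ Set.Ioc (0:ℝ) 1, HasDerivWithinAt r (ρ R) (Set.Ioc 0 1) R) ∧
      (∀ R ∈ Set.Ioc (0:ℝ) 1, 0 < ρ R) ∧
      (∀ R ∈ Set.Ioc (0:ℝ) 1,
        HasDerivWithinAt (fun s => s ^ (n - 1) * Phi1 n κ h' (ρ s) (r s / s))
          (((n:ℝ) - 1) * R ^ (n - 2) * Phi2 n κ h' (ρ R) (r R / R)) (Set.Ioc 0 1) R) := by
  have hint := integrableOn_energy_of_minimizer hn hκ hh hlam hadm hmin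
  obtain ⟨c, hc⟩ := ae_stressTerm_eq hn hκ hh hγ₀ hctrl hadm hint hmin
  have hW : ∀ a : ℝ, 0 < a → IntegrableOn (forceTerm n κ h' r r') (Ioc a 1) := fun a ha =>
    hadm.integrableOn_forceTerm hn hκ hh hγ₀ hctrl hint ha
  set Y : ℝ → ℝ := fun R => c - ∫ x in Ioc R 1, forceTerm n κ h' r r' x with hY
  have hYc : ContinuousOn Y (Ioc 0 1) :=
    continuousOn_const.sub (continuousOn_integral_Ioc_of_forall hW)
  have hrc : ContinuousOn r (Ioc 0 1) := hadm.continuousOn.mono Ioc_subset_Icc_self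
  have hne : ∀ R ∈ Ioc (0:ℝ) 1, R ≠ 0 := fun R hR => hR.1.ne'
  have hvc : ContinuousOn (fun R => r R / R) (Ioc 0 1) := hrc.div continuousOn_id hne
  have hvpos : ∀ R ∈ Ioc (0:ℝ) 1, 0 < r R / R := fun R hR => div_pos (hadm.pos hR) hR.1
  have hlogc : ContinuousOn (fun R => Real.log (r R / R)) (Ioc 0 1) :=
    hvc.log fun R hR => (hvpos R hR).ne'
  set y : ℝ → ℝ := fun R =>
    (Y R - κ * (r R ^ (n - 1) * logCoeff n (r R / R))) / R ^ (n - 1) with hy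
  have hyc : ContinuousOn y (Ioc 0 1) := by
    refine ContinuousOn.div ?_ (by fun_prop) fun R hR => pow_ne_zero _ (hne R hR)
    unfold logCoeff
    fun_prop
  have hyiff : ∀ (σ : ℝ → ℝ), ∀ R ∈ Ioc (0:ℝ) 1,
      stressTerm n κ h' r σ R = Y R ↔ Phi1 n κ h' (σ R) (r R / R) = y R := by
    intro σ R hR
    rw [stressTerm_eq n κ h' r σ hR.1, hy, eq_div_iff (pow_ne_zero _ (hne R hR)),
      ← eq_sub_iff_add_eq, mul_comm]
  have hex : ∀ R : ℝ, ∃ q, R ∈ Ioc (0:ℝ) 1 → 0 < q ∧ Phi1 n κ h' q (r R / R) = y R := by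
    intro R
    by_cases hR : R ∈ Ioc (0:ℝ) 1
    · obtain ⟨q, hq⟩ := exists_Phi1_eq (n := n) hκ hh (hvpos R hR) (y R)
      exact ⟨q, fun _ => hq⟩
    · exact ⟨0, fun h => absurd h hR⟩
  choose ρ hρ using hex
  have hρpos : ∀ R ∈ Ioc (0:ℝ) 1, 0 < ρ R := fun R hR => (hρ R hR).1
  have hρc : ContinuousOn ρ (Ioc 0 1) :=
    continuousOn_of_Phi1_eq hκ hh hvc hyc hvpos hρpos fun R hR => (hρ R hR).2
  have hae : ∀ᵐ R ∂volume.restrict (Ioc (0:ℝ) 1), r' R = ρ R := by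
    filter_upwards [hc, hadm.ae_pos] with R hR ⟨hRm, _, _, hq⟩
    have h1 := (hyiff r' R hRm).1 hR
    exact (Phi1_strictMonoOn (n := n) hκ hh (hvpos R hRm)).injOn hq (hρpos R hRm)
      (h1.trans (hρ R hRm).2.symm)
  have hae' : ∀ R ∈ Ioc (0:ℝ) 1, ∀ᵐ t ∂volume.restrict (Ioc R 1), r' t = ρ t := fun R hR =>
    ae_restrict_of_ae_restrict_of_subset (Ioc_subset_Ioc_left hR.1.le) hae
  have hr : ∀ R ∈ Ioc (0:ℝ) 1, HasDerivWithinAt r (ρ R) (Ioc 0 1) R := by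
    intro R hR
    have h1 := (hasDerivWithinAt_integral_Ioc hρc hR).const_sub lam
    rw [neg_neg] at h1
    have h2 : ∀ x ∈ Ioc (0:ℝ) 1, r x = lam - ∫ t in Ioc x 1, ρ t := by
      intro x hx
      rw [← integral_congr_ae (hae' x hx),
        ← hadm.sub_eq (Ioc_subset_Icc_self hx) (right_mem_Icc.2 zero_le_one) hx.2, hadm.bc]
      ring
    exact h1.congr h2 (h2 R hR)
  have hFc : ContinuousOn (forceTerm n κ h' r ρ) (Ioc 0 1) := by
    have h1 : ContinuousOn (fun R => h' (ρ R * (r R / R) ^ (n - 1))) (Ioc 0 1) :=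
      hh.continuousOn_deriv.comp (by fun_prop) fun R hR =>
        mul_pos (hρpos R hR) (pow_pos (hvpos R hR) _)
    exact (continuousOn_const.mul (continuousOn_id.pow (n - 2))).mul
      ((hρc.mul (hvc.pow (n - 2))).mul ((h1.add continuousOn_const).add
        (continuousOn_const.mul (continuousOn_const.mul (continuousOn_const.add hlogc)))))
  have hYd : ∀ R ∈ Ioc (0:ℝ) 1, HasDerivWithinAt Y (forceTerm n κ h' r ρ R) (Ioc 0 1) R := by
    intro R hR
    have h1 := (hasDerivWithinAt_integral_Ioc hFc hR).const_sub c
    rw [neg_neg] at h1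
    have h2 : ∀ x ∈ Ioc (0:ℝ) 1, Y x = c - ∫ t in Ioc x 1, forceTerm n κ h' r ρ t := by
      intro x hx
      simp only [hY]
      congr 1
      refine integral_congr_ae ?_
      filter_upwards [hae' x hx] with t ht
      simp only [forceTerm, ht]
    exact h1.congr h2 (h2 R hR)
  refine ⟨ρ, hρc, hr, hρpos, fun R hR => ?_⟩
  have h1 := (hYd R hR).sub
    (hasDerivWithinAt_logCoeff_term (κ := κ) (h' := h') hn hR.1 (hadm.pos hR) (hr R hR))
  have h2 : ∀ x ∈ Ioc (0:ℝ) 1, x ^ (n - 1) * Phi1 n κ h' (ρ x) (r x / x) =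
      Y x - κ * (r x ^ (n - 1) * logCoeff n (r x / x)) := by
    intro x hx
    rw [← (hyiff ρ x hx).2 (hρ x hx).2, stressTerm_eq n κ h' r ρ hx.1]
    ring
  refine (h1.congr h2 (h2 R hR)).congr_deriv ?_
  ring

end
end

section
/- Assume h is convex and satisfies the control condition: there exist K, γ₀ > 0 such that |d·h'(c·d)| ≤ K(h(d)+1) for all d > 0 and all c with |c−1| ≤ γ₀. Then there exists λ₀ > 0 such that for every λ > λ₀, any minimizer r of Î over 𝒜_λ satisfies r(0) > 0; in fact, for d ∈ (0,1) and the test function u(R) = λ (dRⁿ + 1 − d)^{1/n} one has Î(u) < Î(λR) for all sufficiently large λ. -/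
open Real MeasureTheory Filter Set
open scoped ENNReal NNReal

noncomputable section

/-- Composing an absolutely continuous function with a Lipschitz one. -/
lemma LipschitzOnWith.comp_absolutelyContinuousOnInterval {φ f : ℝ → ℝ} {C : ℝ≥0} {S : Set ℝ}
    {a b : ℝ} (hφ : LipschitzOnWith C φ S) (hf : AbsolutelyContinuousOnInterval f a b)
    (hfS : MapsTo f (uIcc a b) S) : AbsolutelyContinuousOnInterval (fun x => φ (f x)) a b := by
  have hlim := Tendsto.const_mul (C : ℝ) hf
  rw [mul_zero] at hlim
  refine squeeze_zero' ?_ ?_ hlim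
  · exact Eventually.of_forall fun _ => Finset.sum_nonneg fun _ _ => dist_nonneg
  · rw [eventually_inf_principal]
    filter_upwards with E hE
    rw [Finset.mul_sum]
    refine Finset.sum_le_sum fun i hi => ?_
    exact hφ.dist_le_mul _ (hfS (hE.1 i hi).1) _ (hfS (hE.1 i hi).2)

lemma AbsolutelyContinuousOnInterval.pow_of {f : ℝ → ℝ} {a b : ℝ}
    (hf : AbsolutelyContinuousOnInterval f a b) (n : ℕ) :
    AbsolutelyContinuousOnInterval (fun x => f x ^ n) a b := by
  induction n with
  | zero =>
    simpa using (LipschitzWith.const (1 : ℝ)).lipschitzOnWith.absolutelyContinuousOnInterval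
  | succ k ih => simpa only [pow_succ] using ih.fun_mul hf

lemma hasDerivAt_pow_mul_log {n : ℕ} (hn : 2 ≤ n) {s : ℝ} (hs : 0 < s) :
    HasDerivAt (fun x : ℝ => x ^ n * log x) (n * s ^ (n - 1) * log s + s ^ (n - 1)) s := by
  refine ((hasDerivAt_pow n s).fun_mul (Real.hasDerivAt_log hs.ne')).congr_deriv ?_
  rw [← pow_sub_one_mul (by omega : n ≠ 0) s]
  field_simp

lemma continuous_pow_mul_log {n : ℕ} (hn : 1 ≤ n) : Continuous fun x : ℝ => x ^ n * log x := by
  have : (fun x : ℝ => x ^ n * log x) = fun x => x ^ (n - 1) * (x * log x) := by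
    funext x
    rw [← pow_sub_one_mul (by omega : n ≠ 0) x, mul_assoc]
  rw [this]
  exact (continuous_pow _).mul Real.continuous_mul_log

lemma exists_lipschitzOnWith_pow_mul_log {n : ℕ} (hn : 2 ≤ n) {M : ℝ} (hM : 0 < M) :
    ∃ C : ℝ≥0, LipschitzOnWith C (fun x : ℝ => x ^ n * log x) (Icc 0 M) := by
  have hc : Continuous fun s : ℝ => n * (s ^ (n - 1) * log s) + s ^ (n - 1) :=
    ((continuous_pow_mul_log (by omega)).const_mul _).add (continuous_pow _)
  obtain ⟨C, hC⟩ := (isCompact_Icc (a := (0 : ℝ)) (b := M)).exists_bound_of_continuousOn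
    hc.continuousOn
  refine ⟨C.toNNReal, ?_⟩
  rw [← closure_Ioc hM.ne]
  refine LipschitzOnWith.closure (continuous_pow_mul_log (by omega)).continuousOn ?_
  refine (convex_Ioc 0 M).lipschitzOnWith_of_nnnorm_hasDerivWithin_le
    (fun x hx => (hasDerivAt_pow_mul_log hn hx.1).hasDerivWithinAt) fun x hx => ?_
  have := hC x (Ioc_subset_Icc_self hx)
  rw [← mul_assoc] at this
  rw [← NNReal.coe_le_coe, coe_nnnorm]
  exact this.trans (Real.le_coe_toNNReal C)

lemma absolutelyContinuousOnInterval_log_max {ε : ℝ} (hε : 0 < ε) :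
    AbsolutelyContinuousOnInterval (fun x => log (max x ε)) 0 1 := by
  have hlog : LipschitzOnWith (ε⁻¹).toNNReal log (Ici ε) := by
    refine (convex_Ici ε).lipschitzOnWith_of_nnnorm_hasDerivWithin_le
      (fun x hx => (Real.hasDerivAt_log (hε.trans_le hx).ne').hasDerivWithinAt) fun x hx => ?_
    have hx0 : 0 < x := hε.trans_le hx
    rw [← NNReal.coe_le_coe, coe_nnnorm, Real.norm_of_nonneg (by positivity)]
    exact (inv_anti₀ hε hx).trans (Real.le_coe_toNNReal _)
  refine hlog.comp_absolutelyContinuousOnInterval (f := fun x => max x ε) ?_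
    fun x _ => le_max_right x ε
  exact (LipschitzWith.id.max_const ε).lipschitzOnWith.absolutelyContinuousOnInterval

lemma ConvexOn.tangent_le {h : ℝ → ℝ} {S : Set ℝ} (hc : ConvexOn ℝ S h) {x y m : ℝ}
    (hx : x ∈ S) (hy : y ∈ S) (hm : HasDerivAt h m x) : h x + m * (y - x) ≤ h y := by
  rcases lt_trichotomy x y with hxy | rfl | hxy
  · have := hc.le_slope_of_hasDerivAt hx hy hxy hm
    rw [slope_def_field, le_div_iff₀ (sub_pos.2 hxy)] at this
    linarith
  · simp
  · have := hc.slope_le_of_hasDerivAt hy hx hxy hm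
    rw [slope_def_field, div_le_iff₀ (sub_pos.2 hxy)] at this
    linarith

/-- Weighted arithmetic-geometric mean inequality `n q v^{n-1} ≤ qⁿ + (n-1) vⁿ`. -/
lemma mul_mul_pow_sub_one_le {n : ℕ} (hn : 1 ≤ n) {q v : ℝ} (hq : 0 < q) (hv : 0 < v) :
    n * q * v ^ (n - 1) ≤ q ^ n + ((n : ℝ) - 1) * v ^ n := by
  have hb := one_add_mul_sub_le_pow (a := q / v) (by have := div_pos hq hv; linarith) n
  have hvn : 0 < v ^ n := by positivity
  have := mul_le_mul_of_nonneg_right hb hvn.le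
  rw [div_pow, div_mul_cancel₀ _ hvn.ne'] at this
  have e : (1 + (n : ℝ) * (q / v - 1)) * v ^ n = n * q * v ^ (n - 1) - ((n : ℝ) - 1) * v ^ n := by
    rw [← pow_sub_one_mul (by omega : n ≠ 0) v]
    field_simp
    ring
  linarith

/-- The energy density multiplied by `R^{n-1}`, with the Jacobian factor absorbed. -/
lemma pow_mul_PhiHat_eq {n : ℕ} (κ : ℝ) (h : ℝ → ℝ) {R s : ℝ} (q : ℝ)
    (hR : 0 < R) (hs : 0 < s) :
    R ^ (n - 1) * PhiHat n κ h q (s / R) =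
      κ / n * (R ^ (n - 1) * q ^ n) + R ^ (n - 1) * h (q * (s / R) ^ (n - 1)) +
        κ * (q * s ^ (n - 1)) *
          (((n : ℝ) - 1) / n + ((n : ℝ) - 1) * (log s - log R)) := by
  have e : s ^ (n - 1) = R ^ (n - 1) * (s / R) ^ (n - 1) := by
    rw [div_pow, mul_div_cancel₀ _ (by positivity)]
  rw [PhiHat, Real.log_div hs.ne' hR.ne', e]
  ring

lemma pow_mul_h_ge {n : ℕ} {h : ℝ → ℝ} (hconv : ConvexOn ℝ (Ioi 0) h) {L m R s q : ℝ}
    (hL : 0 < L) (hm : HasDerivAt h m L) (hR : 0 < R) (hs : 0 < s) (hq : 0 < q) :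
    R ^ (n - 1) * (h L - m * L) + m * (q * s ^ (n - 1)) ≤
      R ^ (n - 1) * h (q * (s / R) ^ (n - 1)) := by
  have e : s ^ (n - 1) = R ^ (n - 1) * (s / R) ^ (n - 1) := by
    rw [div_pow, mul_div_cancel₀ _ (by positivity)]
  have hδ : 0 < q * (s / R) ^ (n - 1) := by positivity
  have := mul_le_mul_of_nonneg_left (hconv.tangent_le hL hδ hm) (pow_pos hR (n - 1)).le
  rw [e]
  linarith

lemma le_pow_mul_PhiHat_of_le {n : ℕ} (hn : 2 ≤ n) {κ : ℝ} (hκ : 0 < κ) {h : ℝ → ℝ}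
    (hconv : ConvexOn ℝ (Ioi 0) h) {L m R s q ε : ℝ} (hL : 0 < L) (hm : HasDerivAt h m L)
    (hR : 0 < R) (hs : 0 < s) (hq : 0 < q) (hRε : R ≤ ε) :
    R ^ (n - 1) * (h L - m * L) + m * (q * s ^ (n - 1)) +
        κ * (q * s ^ (n - 1)) * (((n : ℝ) - 1) / n + ((n : ℝ) - 1) * (log s - log ε)) ≤
      R ^ (n - 1) * PhiHat n κ h q (s / R) := by
  have hn1 : (0 : ℝ) ≤ (n : ℝ) - 1 := by
    have : (2 : ℝ) ≤ n := by exact_mod_cast hn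
    linarith
  rw [pow_mul_PhiHat_eq κ h q hR hs]
  have h1 := pow_mul_h_ge (n := n) hconv hL hm hR hs hq
  have h2 : 0 ≤ κ / n * (R ^ (n - 1) * q ^ n) := by positivity
  have h3 : κ * (q * s ^ (n - 1)) * (((n : ℝ) - 1) / n + ((n : ℝ) - 1) * (log s - log ε)) ≤
      κ * (q * s ^ (n - 1)) * (((n : ℝ) - 1) / n + ((n : ℝ) - 1) * (log s - log R)) := by
    have := Real.log_le_log hR hRε
    gcongr
  linarith

lemma le_pow_mul_PhiHat {n : ℕ} (hn : 2 ≤ n) {κ : ℝ} (hκ : 0 < κ) {h : ℝ → ℝ}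
    (hconv : ConvexOn ℝ (Ioi 0) h) {L m R s q : ℝ} (hL : 0 < L) (hm : HasDerivAt h m L)
    (hR : 0 < R) (hs : 0 < s) (hq : 0 < q) :
    R ^ (n - 1) * (h L - m * L) + m * (q * s ^ (n - 1)) +
        κ * (q * s ^ (n - 1)) * (1 + ((n : ℝ) - 1) / n + ((n : ℝ) - 1) * (log s - log R)) -
        κ * ((n : ℝ) - 1) / n * (s ^ n / R) ≤
      R ^ (n - 1) * PhiHat n κ h q (s / R) := by
  rw [pow_mul_PhiHat_eq κ h q hR hs]
  have hn0 : (0 : ℝ) < n := by exact_mod_cast (by omega : 0 < n)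
  have h1 := pow_mul_h_ge (n := n) hconv hL hm hR hs hq
  have h2 := mul_le_mul_of_nonneg_left
    (mul_mul_pow_sub_one_le (by omega : 1 ≤ n) hq (div_pos hs hR))
    (by positivity : 0 ≤ κ / n * R ^ (n - 1))
  have e : s ^ (n - 1) = R ^ (n - 1) * (s / R) ^ (n - 1) := by
    rw [div_pow, mul_div_cancel₀ _ (by positivity)]
  have e2 : s ^ n / R = R ^ (n - 1) * (s / R) ^ n := by
    rw [div_pow, ← pow_sub_one_mul (by omega : n ≠ 0) R]
    field_simp
  have e3 : κ / n * R ^ (n - 1) * (n * q * (s / R) ^ (n - 1)) = κ * (q * s ^ (n - 1)) := by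
    rw [e]
    field_simp
  rw [e3] at h2
  have e4 : κ / n * R ^ (n - 1) * (q ^ n + ((n : ℝ) - 1) * (s / R) ^ n) =
      κ / n * (R ^ (n - 1) * q ^ n) + κ * ((n : ℝ) - 1) / n * (s ^ n / R) := by
    rw [e2]
    ring
  linarith

/-- For an integrable function, the difference of the lower integrals of its positive and negative
parts is its Bochner integral. -/
lemma coe_integral_eq_lintegral_sub {α : Type*} [MeasurableSpace α] {μ : Measure α} {f : α → ℝ}
    (hf : Integrable f μ) :
    ((∫ x, f x ∂μ : ℝ) : EReal) =
      ((∫⁻ x, ENNReal.ofReal (f x) ∂μ : ℝ≥0∞) : EReal) -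
        ((∫⁻ x, ENNReal.ofReal (-f x) ∂μ : ℝ≥0∞) : EReal) := by
  have h1 : ∫⁻ x, ENNReal.ofReal (f x) ∂μ ≠ ⊤ := hf.lintegral_lt_top.ne
  have h2 : ∫⁻ x, ENNReal.ofReal (-f x) ∂μ ≠ ⊤ := hf.neg.lintegral_lt_top.ne
  rw [integral_eq_lintegral_pos_part_sub_lintegral_neg_part hf, EReal.coe_sub,
    EReal.coe_ennreal_toReal h1, EReal.coe_ennreal_toReal h2]

/-- An integrable lower bound `D` of `f` bounds the difference of the lower integrals of the
positive and negative parts of `f` from below, without measurability of `f`. -/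
lemma coe_integral_le_lintegral_sub {α : Type*} [MeasurableSpace α] {μ : Measure α} {D f : α → ℝ}
    (hD : Integrable D μ) (hDf : ∀ᵐ x ∂μ, D x ≤ f x) :
    ((∫ x, D x ∂μ : ℝ) : EReal) ≤
      ((∫⁻ x, ENNReal.ofReal (f x) ∂μ : ℝ≥0∞) : EReal) -
        ((∫⁻ x, ENNReal.ofReal (-f x) ∂μ : ℝ≥0∞) : EReal) := by
  rw [coe_integral_eq_lintegral_sub hD]
  refine EReal.sub_le_sub ?_ ?_
  · refine EReal.coe_ennreal_le_coe_ennreal_iff.2 (lintegral_mono_ae ?_)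
    filter_upwards [hDf] with x hx using ENNReal.ofReal_le_ofReal hx
  · refine EReal.coe_ennreal_le_coe_ennreal_iff.2 (lintegral_mono_ae ?_)
    filter_upwards [hDf] with x hx using ENNReal.ofReal_le_ofReal (neg_le_neg hx)

lemma IHatE_eq_of_integrableOn {n : ℕ} {κ lam : ℝ} {h r r' f : ℝ → ℝ}
    (hf : IntegrableOn f (Ioc 0 1))
    (hfr : ∀ R ∈ Ioc (0 : ℝ) 1, R ^ (n - 1) * PhiHat n κ h (r' R) (r R / R) = f R) :
    IHatE n κ lam h r r' =
      ((∫ R in Ioc (0 : ℝ) 1, f R) - κ * ((n : ℝ) - 1) / n * lam ^ n * log lam : ℝ) := by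
  have hpos : ∫⁻ R in Ioc (0 : ℝ) 1, ENNReal.ofReal (R ^ (n - 1) * PhiHat n κ h (r' R) (r R / R)) =
      ∫⁻ R in Ioc (0 : ℝ) 1, ENNReal.ofReal (f R) :=
    setLIntegral_congr_fun measurableSet_Ioc fun R hR => congrArg _ (hfr R hR)
  have hneg : ∫⁻ R in Ioc (0 : ℝ) 1,
        ENNReal.ofReal (-(R ^ (n - 1) * PhiHat n κ h (r' R) (r R / R))) =
      ∫⁻ R in Ioc (0 : ℝ) 1, ENNReal.ofReal (-f R) :=
    setLIntegral_congr_fun measurableSet_Ioc fun R hR =>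
      congrArg (fun x => ENNReal.ofReal (-x)) (hfr R hR)
  rw [EReal.coe_sub, coe_integral_eq_lintegral_sub hf, IHatE, hpos, hneg]

lemma integral_Ioc_pow_sub_one {n : ℕ} (hn : 1 ≤ n) :
    ∫ R in Ioc (0 : ℝ) 1, R ^ (n - 1) = 1 / n := by
  rw [← intervalIntegral.integral_of_le zero_le_one, integral_pow, Nat.sub_add_cancel hn]
  simp [Nat.cast_sub hn, show n ≠ 0 by omega]

/-- The energy of the homogeneous deformation. -/
lemma IHatE_homogeneous {n : ℕ} (hn : 2 ≤ n) (κ : ℝ) (h : ℝ → ℝ) (lam : ℝ) :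
    IHatE n κ lam h (fun R => lam * R) (fun _ => lam) =
      (κ * lam ^ n / n + h (lam ^ n) / n : ℝ) := by
  have hn0 : (n : ℝ) ≠ 0 := by exact_mod_cast (by omega : n ≠ 0)
  rw [IHatE_eq_of_integrableOn (f := fun R => R ^ (n - 1) * PhiHat n κ h lam lam)
    ((Continuous.integrableOn_Icc (by fun_prop)).mono_set Ioc_subset_Icc_self)
    (fun R hR => by rw [mul_div_cancel_right₀ _ hR.1.ne'])]
  rw [integral_mul_const, integral_Ioc_pow_sub_one (by omega), PhiHat,
    mul_pow_sub_one (by omega : n ≠ 0)]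
  congr 1
  field_simp
  ring

lemma Adm.exists_absolutelyContinuous {lam : ℝ} {r r' : ℝ → ℝ} (hr : Adm lam r r') :
    ∃ ρ : ℝ → ℝ, AbsolutelyContinuousOnInterval ρ 0 1 ∧ EqOn r ρ (Icc 0 1) ∧
      ∀ᵐ R ∂(volume.restrict (Ioc (0 : ℝ) 1)), HasDerivAt ρ (r' R) R := by
  have hi : IntervalIntegrable r' volume 0 1 :=
    (intervalIntegrable_iff_integrableOn_Ioc_of_le zero_le_one).2 hr.intg
  refine ⟨fun R => r 0 + ∫ t in (0 : ℝ)..R, r' t, ?_, ?_, ?_⟩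
  · exact ((LipschitzWith.const (r 0)).lipschitzOnWith.absolutelyContinuousOnInterval).fun_add
      (hi.absolutelyContinuousOnInterval_intervalIntegral (c := 0) (by simp))
  · intro R hR
    simp only [intervalIntegral.integral_of_le hR.1]
    exact hr.ftc R hR
  · rw [ae_restrict_iff' measurableSet_Ioc]
    filter_upwards [hi.ae_hasDerivAt_integral] with x hx hx01
    rw [uIcc_of_le zero_le_one] at hx
    exact (hx (Ioc_subset_Icc_self hx01) 0 (by simp)).const_add _

lemma Adm.pos_s16 {lam : ℝ} {r r' : ℝ → ℝ} (hr : Adm lam r r') {R : ℝ} (hR : R ∈ Ioc (0 : ℝ) 1) :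
    0 < r R := by
  rw [hr.ftc R (Ioc_subset_Icc_self hR)]
  have hsub : Ioc 0 R ⊆ Ioc (0 : ℝ) 1 := Ioc_subset_Ioc_right hR.2
  have hae : ∀ᵐ t ∂(volume.restrict (Ioc (0 : ℝ) R)), 0 < r' t :=
    ae_mono (Measure.restrict_mono hsub le_rfl) hr.derivPos
  have : 0 < ∫ t in Ioc 0 R, r' t := by
    have hnonneg : 0 ≤ᵐ[volume.restrict (Ioc (0 : ℝ) R)] r' := hae.mono fun _ ht => ht.le
    refine (integral_nonneg_of_ae hnonneg).lt_of_ne fun h0 => ?_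
    have hzero := (integral_eq_zero_iff_of_nonneg_ae hnonneg (hr.intg.mono_set hsub)).1 h0.symm
    have : (ae (volume.restrict (Ioc (0 : ℝ) R))).NeBot := by
      rw [ae_neBot, Ne, Measure.restrict_eq_zero]
      simp [hR.1]
    obtain ⟨t, ht, ht0⟩ := (hae.and hzero).exists
    exact ht.ne' ht0
  linarith [hr.c0]

/-- The null-Lagrangian potential used to bound the energy of `ρ` from below, with the singular
factor `log R` frozen at `log ε` for `R ≤ ε`. -/
def calibration (n : ℕ) (κ hL m L ε : ℝ) (ρ : ℝ → ℝ) (R : ℝ) : ℝ :=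
  (κ + m) / n * ρ R ^ n + κ * ((n : ℝ) - 1) / n * (ρ R ^ n * log (ρ R)) -
    κ * ((n : ℝ) - 1) / n * (ρ R ^ n * log (max R ε)) + (hL - m * L) / n * R ^ n

lemma absolutelyContinuousOnInterval_calibration {n : ℕ} (hn : 2 ≤ n) (κ hL m L : ℝ) {ε : ℝ}
    (hε : 0 < ε) {ρ : ℝ → ℝ} (hρ : AbsolutelyContinuousOnInterval ρ 0 1)
    (hρ0 : ∀ R ∈ Icc (0 : ℝ) 1, 0 ≤ ρ R) :
    AbsolutelyContinuousOnInterval (calibration n κ hL m L ε ρ) 0 1 := by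
  obtain ⟨M, hM⟩ := hρ.exists_bound
  obtain ⟨C, hC⟩ := exists_lipschitzOnWith_pow_mul_log hn (M := max M 1) (by positivity)
  have hmaps : MapsTo ρ (uIcc 0 1) (Icc 0 (max M 1)) := fun R hR =>
    ⟨hρ0 R (by rwa [uIcc_of_le zero_le_one] at hR),
      (le_abs_self _).trans ((hM R hR).trans (le_max_left _ _))⟩
  have hid : AbsolutelyContinuousOnInterval (fun R : ℝ => R) 0 1 :=
    LipschitzWith.id.lipschitzOnWith.absolutelyContinuousOnInterval
  have hlog := hC.comp_absolutelyContinuousOnInterval hρ hmaps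
  exact ((((hρ.pow_of n).const_mul _).fun_add (hlog.const_mul _)).fun_sub
    (((hρ.pow_of n).fun_mul (absolutelyContinuousOnInterval_log_max hε)).const_mul _)).fun_add
    ((hid.pow_of n).const_mul _)

lemma hasDerivAt_calibration {n : ℕ} (hn : 2 ≤ n) (κ hL m L : ℝ) {ε R q l : ℝ} {ρ : ℝ → ℝ}
    (hρ : HasDerivAt ρ q R) (hpos : 0 < ρ R) (hl : HasDerivAt (fun x => log (max x ε)) l R) :
    HasDerivAt (calibration n κ hL m L ε ρ)
      (R ^ (n - 1) * (hL - m * L) + m * (q * ρ R ^ (n - 1)) +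
        κ * (q * ρ R ^ (n - 1)) *
          (1 + ((n : ℝ) - 1) / n + ((n : ℝ) - 1) * (log (ρ R) - log (max R ε))) -
        κ * ((n : ℝ) - 1) / n * (ρ R ^ n * l)) R := by
  have hn0 : (n : ℝ) ≠ 0 := by exact_mod_cast (by omega : n ≠ 0)
  have hpow := hρ.fun_pow n
  have hlog := (hasDerivAt_pow_mul_log hn hpos).comp R hρ
  refine ((((hpow.const_mul _).fun_add (hlog.const_mul _)).fun_sub
    ((hpow.fun_mul hl).const_mul _)).fun_add
    ((hasDerivAt_pow n R).const_mul _)).congr_deriv ?_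
  field_simp
  ring

lemma hasDerivAt_log_max_of_lt {ε R : ℝ} (hR : R < ε) :
    HasDerivAt (fun x => log (max x ε)) 0 R := by
  refine (hasDerivAt_const R (log ε)).congr_of_eventuallyEq ?_
  filter_upwards [eventually_lt_nhds hR] with x hx
  rw [max_eq_right hx.le]

lemma hasDerivAt_log_max_of_gt {ε R : ℝ} (hε : 0 < ε) (hR : ε < R) :
    HasDerivAt (fun x => log (max x ε)) R⁻¹ R := by
  refine (Real.hasDerivAt_log (hε.trans hR).ne').congr_of_eventuallyEq ?_
  filter_upwards [eventually_gt_nhds hR] with x hx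
  rw [max_eq_left hx.le]

/-- Without a cavity the energy is at least that of the homogeneous deformation, up to an error
controlled by the deformation near the centre. -/
lemma homogeneous_sub_le_IHatE {n : ℕ} (hn : 2 ≤ n) {κ lam : ℝ} (hκ : 0 < κ) (hlam : 0 < lam)
    {h : ℝ → ℝ} (hconv : ConvexOn ℝ (Ioi 0) h) {m : ℝ} (hm : HasDerivAt h m (lam ^ n))
    {r r' ρ : ℝ → ℝ} (hr : Adm lam r r') (hr0 : r 0 = 0)
    (hρ : AbsolutelyContinuousOnInterval ρ 0 1) (hrρ : EqOn r ρ (Icc 0 1))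
    (hρ' : ∀ᵐ R ∂(volume.restrict (Ioc (0 : ℝ) 1)), HasDerivAt ρ (r' R) R)
    {ε : ℝ} (hε : ε ∈ Ioo (0 : ℝ) 1) :
    ((κ * lam ^ n / n + h (lam ^ n) / n - κ / n * ρ ε ^ n : ℝ) : EReal) ≤
      IHatE n κ lam h r r' := by
  have hn0 : (n : ℝ) ≠ 0 := by exact_mod_cast (by omega : n ≠ 0)
  have hL : 0 < lam ^ n := by positivity
  have hpos : ∀ R ∈ Ioc (0 : ℝ) 1, 0 < ρ R := fun R hR => by
    rw [← hrρ (Ioc_subset_Icc_self hR)]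
    exact hr.pos_s16 hR
  have hρ0 : ρ 0 = 0 := by rw [← hrρ (by simp), hr0]
  have hρ1 : ρ 1 = lam := by rw [← hrρ (by simp), hr.bc]
  have hnonneg : ∀ R ∈ Icc (0 : ℝ) 1, 0 ≤ ρ R := fun R hR => by
    rcases hR.1.eq_or_lt with rfl | h0
    · exact hρ0.ge
    · exact (hpos R ⟨h0, hR.2⟩).le
  set G := calibration n κ (h (lam ^ n)) m (lam ^ n) ε ρ with hG
  have hGac : AbsolutelyContinuousOnInterval G 0 1 :=
    absolutelyContinuousOnInterval_calibration hn κ _ m _ hε.1 hρ hnonneg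
  have hPac := hρ.pow_of n
  have hGi : IntegrableOn (deriv G) (Ioc 0 1) :=
    (intervalIntegrable_iff_integrableOn_Ioc_of_le zero_le_one).1 hGac.intervalIntegrable_deriv
  have hPi : IntegrableOn (deriv fun R => ρ R ^ n) (Ioc 0 1) :=
    (intervalIntegrable_iff_integrableOn_Ioc_of_le zero_le_one).1 hPac.intervalIntegrable_deriv
  set P : ℝ → ℝ := (Iic ε).indicator fun R => κ / n * deriv (fun x => ρ x ^ n) R with hP
  have hPint : IntegrableOn P (Ioc 0 1) := (hPi.const_mul _).indicator measurableSet_Iic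
  have hGval : ∫ R in Ioc (0 : ℝ) 1, deriv G R = G 1 - G 0 := by
    rw [← intervalIntegral.integral_of_le zero_le_one, hGac.integral_deriv_eq_sub]
  have hPval : ∫ R in Ioc (0 : ℝ) 1, P R = κ / n * ρ ε ^ n := by
    rw [hP, setIntegral_indicator measurableSet_Iic, integral_const_mul, Ioc_inter_Iic,
      min_eq_right hε.2.le, ← intervalIntegral.integral_of_le hε.1.le,
      (hPac.mono ?_).integral_deriv_eq_sub, hρ0, zero_pow (by omega), sub_zero]
    rw [uIcc_of_le hε.1.le, uIcc_of_le zero_le_one]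
    exact Icc_subset_Icc_right hε.2.le
  have hbound : ∀ᵐ R ∂(volume.restrict (Ioc (0 : ℝ) 1)),
      deriv G R - P R ≤ R ^ (n - 1) * PhiHat n κ h (r' R) (r R / R) := by
    have hne : ∀ᵐ R ∂(volume.restrict (Ioc (0 : ℝ) 1)), R ≠ ε :=
      ae_restrict_of_ae (by simp [ae_iff, measure_singleton])
    filter_upwards [hρ', hr.derivPos, ae_restrict_mem measurableSet_Ioc, hne] with R hd hq hR hRε
    have hs := hpos R hR
    rw [hrρ (Ioc_subset_Icc_self hR)]
    rcases hRε.lt_or_gt with hlt | hgt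
    · have hGd := (hasDerivAt_calibration hn κ (h (lam ^ n)) m (lam ^ n) hd hs
        (hasDerivAt_log_max_of_lt hlt)).deriv
      have hPR : P R = κ * (r' R * ρ R ^ (n - 1)) := by
        rw [hP, indicator_of_mem (mem_Iic.2 hlt.le), (hd.fun_pow n).deriv]
        field_simp
      rw [hGd, hPR, max_eq_right hlt.le]
      have := le_pow_mul_PhiHat_of_le hn hκ hconv hL hm hR.1 hs hq hlt.le
      linarith
    · have hGd := (hasDerivAt_calibration hn κ (h (lam ^ n)) m (lam ^ n) hd hs
        (hasDerivAt_log_max_of_gt hε.1 hgt)).deriv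
      have hPR : P R = 0 := indicator_of_notMem (by simpa using hgt) _
      rw [hGd, hPR, max_eq_left hgt.le, sub_zero, ← div_eq_mul_inv]
      exact le_pow_mul_PhiHat hn hκ hconv hL hm hR.1 hs hq
  have hlow := coe_integral_le_lintegral_sub (hGi.sub hPint) hbound
  have hG0 : G 0 = 0 := by
    simp [hG, calibration, hρ0, show n ≠ 0 by omega]
  have hG1 : G 1 = κ * lam ^ n / n + h (lam ^ n) / n +
      κ * ((n : ℝ) - 1) / n * lam ^ n * log lam := by
    simp only [hG, calibration, hρ1, max_eq_left hε.2.le, log_one, one_pow]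
    ring
  rw [integral_sub' hGi hPint, hGval, hPval, hG0, hG1] at hlow
  rw [IHatE]
  refine le_trans (le_of_eq ?_) (EReal.sub_le_sub hlow le_rfl)
  rw [← EReal.coe_sub]
  congr 1
  ring

/-- Among deformations without a cavity the homogeneous one minimizes the modified energy. -/
lemma IHatE_homogeneous_le {n : ℕ} (hn : 2 ≤ n) {κ lam : ℝ} (hκ : 0 < κ) (hlam : 0 < lam)
    {h : ℝ → ℝ} (hconv : ConvexOn ℝ (Ioi 0) h) {m : ℝ} (hm : HasDerivAt h m (lam ^ n))
    {r r' : ℝ → ℝ} (hr : Adm lam r r') (hr0 : r 0 = 0) :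
    IHatE n κ lam h (fun R => lam * R) (fun _ => lam) ≤ IHatE n κ lam h r r' := by
  obtain ⟨ρ, hρ, hrρ, hρ'⟩ := hr.exists_absolutelyContinuous
  rw [IHatE_homogeneous hn]
  have hρ0 : ρ 0 = 0 := by rw [← hrρ (by simp), hr0]
  have hcont : Tendsto ρ (nhdsWithin 0 (Ioo 0 1)) (nhds 0) := by
    have := hρ.continuousOn 0 (by simp)
    rw [ContinuousWithinAt, hρ0, uIcc_of_le zero_le_one] at this
    exact this.mono_left (nhdsWithin_mono _ Ioo_subset_Icc_self)
  have hlim : Tendsto (fun ε => κ * lam ^ n / n + h (lam ^ n) / n - κ / n * ρ ε ^ n)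
      (nhdsWithin 0 (Ioo 0 1)) (nhds (κ * lam ^ n / n + h (lam ^ n) / n)) := by
    have := ((hcont.pow n).const_mul (κ / n)).const_sub (κ * lam ^ n / n + h (lam ^ n) / n)
    simpa [show n ≠ 0 by omega] using this
  have hne : (nhdsWithin (0 : ℝ) (Ioo 0 1)).NeBot := left_nhdsWithin_Ioo_neBot zero_lt_one
  refine le_of_tendsto ((continuous_coe_real_ereal.tendsto _).comp hlim) ?_
  filter_upwards [self_mem_nhdsWithin] with ε hε
  exact homogeneous_sub_le_IHatE hn hκ hlam hconv hm hr hr0 hρ hrρ hρ' hε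

/-- The part of the energy density of the cavitating test deformation that scales like `λⁿ`. -/
def testDensity (n : ℕ) (κ d R : ℝ) : ℝ :=
  κ / n * (R ^ (n - 1) * (d * R ^ (n - 1) * (d * R ^ n + 1 - d) ^ ((1 : ℝ) / n - 1)) ^ n) +
    κ * (d * R ^ (n - 1)) *
      (((n : ℝ) - 1) / n + ((n : ℝ) - 1) * ((1 : ℝ) / n * log (d * R ^ n + 1 - d))) -
    κ * d * ((n : ℝ) - 1) * (R ^ (n - 1) * log R)

lemma test_base_pos (n : ℕ) {d R : ℝ} (hd : d ∈ Ioo (0 : ℝ) 1) (hR : 0 ≤ R) :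
    0 < d * R ^ n + 1 - d := by
  have := mul_nonneg hd.1.le (pow_nonneg hR n)
  linarith [hd.2]

lemma continuousOn_testDensity {n : ℕ} (hn : 2 ≤ n) (κ : ℝ) {d : ℝ} (hd : d ∈ Ioo (0 : ℝ) 1) :
    ContinuousOn (testDensity n κ d) (Icc 0 1) := by
  have hw : ContinuousOn (fun R : ℝ => d * R ^ n + 1 - d) (Icc 0 1) := by fun_prop
  have hne : ∀ R ∈ Icc (0 : ℝ) 1, d * R ^ n + 1 - d ≠ 0 := fun R hR =>
    (test_base_pos n hd hR.1).ne'
  have hrpow : ContinuousOn (fun R : ℝ => (d * R ^ n + 1 - d) ^ ((1 : ℝ) / n - 1)) (Icc 0 1) :=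
    hw.rpow_const fun R hR => Or.inl (hne R hR)
  have hlog : ContinuousOn (fun R : ℝ => log (d * R ^ n + 1 - d)) (Icc 0 1) := hw.log hne
  have hRlog : ContinuousOn (fun R : ℝ => R ^ (n - 1) * log R) (Icc 0 1) :=
    (continuous_pow_mul_log (by omega)).continuousOn
  unfold testDensity
  fun_prop

lemma pow_mul_PhiHat_test {n : ℕ} (hn : 2 ≤ n) (κ : ℝ) (h : ℝ → ℝ) {d lam R : ℝ}
    (hd : d ∈ Ioo (0 : ℝ) 1) (hlam : 0 < lam) (hR : 0 < R) :
    R ^ (n - 1) * PhiHat n κ h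
        (lam * d * R ^ (n - 1) * (d * R ^ n + 1 - d) ^ ((1 : ℝ) / n - 1))
        (lam * (d * R ^ n + 1 - d) ^ ((1 : ℝ) / n) / R) =
      lam ^ n * testDensity n κ d R +
        R ^ (n - 1) * (h (d * lam ^ n) + κ * d * ((n : ℝ) - 1) * (lam ^ n * log lam)) := by
  have hw := test_base_pos n hd hR.le
  rw [testDensity]
  set w := d * R ^ n + 1 - d
  have hn0 : (n : ℝ) ≠ 0 := by exact_mod_cast (by omega : n ≠ 0)
  have hs : 0 < lam * w ^ ((1 : ℝ) / n) := by positivity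
  have hwpow : w ^ ((1 : ℝ) / n - 1) * (w ^ ((1 : ℝ) / n)) ^ (n - 1) = 1 := by
    rw [← Real.rpow_mul_natCast hw.le, ← Real.rpow_add hw, Nat.cast_sub (by omega), Nat.cast_one]
    have : (1 : ℝ) / n - 1 + 1 / n * (n - 1) = 0 := by
      field_simp
      ring
    rw [this, Real.rpow_zero]
  have hqs : lam * d * R ^ (n - 1) * w ^ ((1 : ℝ) / n - 1) * (lam * w ^ ((1 : ℝ) / n)) ^ (n - 1) =
      lam ^ n * (d * R ^ (n - 1)) := by
    rw [mul_pow, ← mul_pow_sub_one (by omega : n ≠ 0) lam]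
    linear_combination lam * d * R ^ (n - 1) * lam ^ (n - 1) * hwpow
  have hdet : lam * d * R ^ (n - 1) * w ^ ((1 : ℝ) / n - 1) *
      (lam * w ^ ((1 : ℝ) / n) / R) ^ (n - 1) = d * lam ^ n := by
    rw [div_pow, ← mul_div_assoc, hqs]
    field_simp
  rw [pow_mul_PhiHat_eq κ h _ hR hs, hqs, hdet, Real.log_mul hlam.ne' (by positivity),
    Real.log_rpow hw, show lam * d * R ^ (n - 1) * w ^ ((1 : ℝ) / n - 1) =
      lam * (d * R ^ (n - 1) * w ^ ((1 : ℝ) / n - 1)) by ring, mul_pow lam]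
  ring

/-- The energy of the cavitating test deformation. -/
lemma IHatE_test {n : ℕ} (hn : 2 ≤ n) (κ : ℝ) (h : ℝ → ℝ) {d lam : ℝ}
    (hd : d ∈ Ioo (0 : ℝ) 1) (hlam : 0 < lam) :
    IHatE n κ lam h (fun R => lam * (d * R ^ n + 1 - d) ^ ((1 : ℝ) / n))
        (fun R => lam * d * R ^ (n - 1) * (d * R ^ n + 1 - d) ^ ((1 : ℝ) / n - 1)) =
      (lam ^ n * (∫ R in Ioc (0 : ℝ) 1, testDensity n κ d R) + h (d * lam ^ n) / n -
        κ * (1 - d) * ((n : ℝ) - 1) / n * (lam ^ n * log lam) : ℝ) := by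
  have hi : IntegrableOn (testDensity n κ d) (Ioc 0 1) :=
    (continuousOn_testDensity hn κ hd).integrableOn_Icc.mono_set Ioc_subset_Icc_self
  have hi' : IntegrableOn (fun R : ℝ => R ^ (n - 1)) (Ioc 0 1) :=
    (continuous_pow _).integrableOn_Icc.mono_set Ioc_subset_Icc_self
  rw [IHatE_eq_of_integrableOn ((hi.const_mul _).add (hi'.mul_const _))
    fun R hR => pow_mul_PhiHat_test hn κ h hd hlam hR.1]
  rw [integral_add' (hi.const_mul _) (hi'.mul_const _), integral_const_mul, integral_mul_const,
    integral_Ioc_pow_sub_one (by omega)]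
  congr 1
  ring

lemma adm_test {n : ℕ} (hn : 2 ≤ n) {d lam : ℝ} (hd : d ∈ Ioo (0 : ℝ) 1) (hlam : 0 < lam) :
    Adm lam (fun R => lam * (d * R ^ n + 1 - d) ^ ((1 : ℝ) / n))
      (fun R => lam * d * R ^ (n - 1) * (d * R ^ n + 1 - d) ^ ((1 : ℝ) / n - 1)) := by
  have hn0 : (n : ℝ) ≠ 0 := by exact_mod_cast (by omega : n ≠ 0)
  have hw : ContinuousOn (fun R : ℝ => d * R ^ n + 1 - d) (Icc 0 1) := by fun_prop
  have hcont : ContinuousOn (fun R : ℝ =>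
      lam * d * R ^ (n - 1) * (d * R ^ n + 1 - d) ^ ((1 : ℝ) / n - 1)) (Icc 0 1) :=
    ContinuousOn.mul (by fun_prop)
      (hw.rpow_const fun R hR => Or.inl (test_base_pos n hd hR.1).ne')
  have hderiv : ∀ R : ℝ, 0 ≤ R → HasDerivAt (fun R => lam * (d * R ^ n + 1 - d) ^ ((1 : ℝ) / n))
      (lam * d * R ^ (n - 1) * (d * R ^ n + 1 - d) ^ ((1 : ℝ) / n - 1)) R := fun R hR => by
    have hb : HasDerivAt (fun R : ℝ => d * R ^ n + 1 - d) (d * (n * R ^ (n - 1))) R :=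
      (((hasDerivAt_pow n R).const_mul d).add_const 1).sub_const d
    refine ((hb.rpow_const (p := (1 : ℝ) / n)
      (Or.inl (test_base_pos n hd hR).ne')).const_mul lam).congr_deriv ?_
    field_simp
  refine ⟨hcont.integrableOn_Icc.mono_set Ioc_subset_Icc_self, fun R hR => ?_, ?_, ?_, ?_⟩
  · have hsub : Icc 0 R ⊆ Icc (0 : ℝ) 1 := Icc_subset_Icc_right hR.2
    have := intervalIntegral.integral_eq_sub_of_hasDerivAt (a := 0) (b := R)
      (fun x hx => hderiv x (by rw [uIcc_of_le hR.1] at hx; exact hx.1))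
      ((hcont.mono hsub).intervalIntegrable_of_Icc hR.1)
    rw [intervalIntegral.integral_of_le hR.1] at this
    rw [this]
    ring
  · filter_upwards [ae_restrict_mem measurableSet_Ioc] with R hR
    have h1 := test_base_pos n hd hR.1.le
    have h2 := hR.1
    have h3 := hd.1
    positivity
  · simp
  · have := test_base_pos n hd le_rfl
    positivity

/-- The cavitating test deformation has less energy than the homogeneous one for large `λ`. -/
lemma exists_IHatE_test_lt {n : ℕ} (hn : 2 ≤ n) {κ : ℝ} (hκ : 0 < κ) {h h' h'' : ℝ → ℝ}
    (hh : GoodH h h' h'') (hconv : ConvexOn ℝ (Ioi 0) h) {d : ℝ} (hd : d ∈ Ioo (0 : ℝ) 1) :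
    ∃ lam₁ : ℝ, 0 < lam₁ ∧ ∀ lam : ℝ, lam₁ < lam →
      IHatE n κ lam h (fun R => lam * (d * R ^ n + 1 - d) ^ ((1 : ℝ) / n))
          (fun R => lam * d * R ^ (n - 1) * (d * R ^ n + 1 - d) ^ ((1 : ℝ) / n - 1))
        < IHatE n κ lam h (fun R => lam * R) (fun _ => lam) := by
  have hn2 : (2 : ℝ) ≤ n := by exact_mod_cast hn
  have hn0 : (0 : ℝ) < n := by linarith
  set A := ∫ R in Ioc (0 : ℝ) 1, testDensity n κ d R
  set c := κ * (1 - d) * ((n : ℝ) - 1) / n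
  have hc : 0 < c := by
    have h1 : 0 < 1 - d := by linarith [hd.2]
    have h2 : 0 < (n : ℝ) - 1 := by linarith
    positivity
  have hlog : ∀ᶠ lam : ℝ in atTop, A < c * log lam :=
    (Real.tendsto_log_atTop.const_mul_atTop hc).eventually_gt_atTop A
  have hder : ∀ᶠ lam : ℝ in atTop, 0 ≤ h' (d * lam ^ n) :=
    (hh.dlim_top.comp ((tendsto_pow_atTop (by omega)).const_mul_atTop hd.1)).eventually_ge_atTop 0
  obtain ⟨lam₁, hlam₁⟩ := eventually_atTop.1 (hlog.and hder)
  refine ⟨max lam₁ 1, by positivity, fun lam hlam => ?_⟩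
  have hpos : 0 < lam := zero_lt_one.trans ((le_max_right _ _).trans_lt hlam)
  obtain ⟨hl, hd'⟩ := hlam₁ lam ((le_max_left _ _).trans hlam.le)
  rw [IHatE_test hn κ h hd hpos, IHatE_homogeneous hn, EReal.coe_lt_coe_iff]
  have hL : 0 < lam ^ n := by positivity
  have hdL : 0 < d * lam ^ n := mul_pos hd.1 hL
  have hmono : h (d * lam ^ n) ≤ h (lam ^ n) := by
    have htan := hconv.tangent_le hdL hL (hh.deriv1 _ hdL)
    have : 0 ≤ h' (d * lam ^ n) * (lam ^ n - d * lam ^ n) :=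
      mul_nonneg hd' (by nlinarith [hd.2])
    linarith
  have h1 : h (d * lam ^ n) / n ≤ h (lam ^ n) / n := by gcongr
  have h2 : lam ^ n * A < lam ^ n * (c * log lam) := by gcongr
  have h3 : 0 < κ * lam ^ n / n := by positivity
  linarith

/-- for all sufficiently large `λ`, every minimizer of `Î` over `𝒜_λ`
cavitates (`r(0) > 0`); in fact, for `d ∈ (0,1)` the test deformation
`u(R) = λ(dRⁿ + 1 − d)^{1/n}` has `Î(u) < Î(λR)` for all sufficiently large `λ`. -/
theorem stmt16 (n : ℕ) (hn : 2 ≤ n) (κ : ℝ) (hκ : 0 < κ)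
    (h h' h'' : ℝ → ℝ) (hh : GoodH h h' h'') (hconv : ConvexOn ℝ (Set.Ioi 0) h)
    (K γ₀ : ℝ) (hK : 0 < K) (hγ₀ : 0 < γ₀)
    (hctrl : ∀ d : ℝ, 0 < d → ∀ c : ℝ, |c - 1| ≤ γ₀ → |d * h' (c * d)| ≤ K * (h d + 1)) :
    (∃ lam₀ : ℝ, 0 < lam₀ ∧ ∀ lam : ℝ, lam₀ < lam →
      ∀ r r' : ℝ → ℝ, Adm lam r r' →
        (∀ s s' : ℝ → ℝ, Adm lam s s' → IHatE n κ lam h r r' ≤ IHatE n κ lam h s s') →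
        0 < r 0) ∧
    (∀ d ∈ Set.Ioo (0:ℝ) 1, ∃ lam₁ : ℝ, ∀ lam : ℝ, lam₁ < lam →
      IHatE n κ lam h (fun R => lam * (d * R ^ n + 1 - d) ^ ((1:ℝ) / n))
          (fun R => lam * d * R ^ (n - 1) * (d * R ^ n + 1 - d) ^ ((1:ℝ) / n - 1))
        < IHatE n κ lam h (fun R => lam * R) (fun _ => lam)) := by
  refine ⟨?_, fun d hd => ?_⟩
  · have hd : (1 / 2 : ℝ) ∈ Ioo (0 : ℝ) 1 := by norm_num
    obtain ⟨lam₀, hlam₀, hlt⟩ := exists_IHatE_test_lt hn hκ hh hconv hd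
    refine ⟨lam₀, hlam₀, fun lam hlam r r' hr hmin => hr.c0.lt_of_ne fun hr0 => ?_⟩
    have hpos : 0 < lam := hlam₀.trans hlam
    have hle := IHatE_homogeneous_le hn hκ hpos hconv (hh.deriv1 _ (pow_pos hpos n)) hr hr0.symm
    exact absurd (hle.trans (hmin _ _ (adm_test hn hd hpos))) (hlt lam hlam).not_ge
  · obtain ⟨lam₁, -, hlt⟩ := exists_IHatE_test_lt hn hκ hh hconv hd
    exact ⟨lam₁, hlt⟩

end
end
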